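/- arXiv:2210.00040 — 6 statements merged into one kernel-verified Lean document; each statement's English description precedes it below -/
import Mathlib

section
/- Let f, g : ℝⁿ → ℝⁿ and h : ℝⁿ → ℝˡ, and let ψ₁,…,ψ_M : ℝⁿ → ℝ be continuously differentiable observable functions with M > n. Assume: (1) for each i, the function x ↦ ∇ψᵢ(x)·f(x) lies in the real linear span of {ψ₁,…,ψ_M}; (2) for each i and each j ∈ {1,…,n}, the function x ↦ (∂ψᵢ/∂xⱼ)(x) gⱼ(x) lies in the real linear span of the constant function 1 together with {ψ₁,…,ψ_M}; (3) each component h_p of h lies in the real linear span of {ψ₁,…,ψ_M}. Then there exist a matrix A ∈ ℝ^{M×M}, a vector B ∈ ℝ^M, a matrix N ∈ ℝ^{M×M} and a matrix C ∈ ℝ^{l×M} such that: for every differentiable curve x : ℝ → ℝⁿ and continuous functions u, v : ℝ → ℝ satisfying x'(t) = f(x(t)) + g(x(t))·(u(t)+v(t)) for all t, the curve z(t) = Ψ(x(t)) = (ψ₁(x(t)),…,ψ_M(x(t))) satisfies z'(t) = A z(t) + B (u(t)+v(t)) + (u(t)+v(t)) · N z(t) for all t, and moreover h(x) = C Ψ(x)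 for all x ∈ ℝⁿ. -/
open Matrix

/-- Lemma 1: a finite dictionary of observables satisfying the Koopman-invariance
properties yields an equivalent bilinear representation
`ż = Az + B(u+v) + (u+v) N z`, `y = C Ψ(x)`. -/
theorem koopman_bilinear_representation
    (n M l : ℕ) (hM : n < M)
    (f g : (Fin n → ℝ) → (Fin n → ℝ))
    (h : (Fin n → ℝ) → (Fin l → ℝ))
    (ψ : Fin M → (Fin n → ℝ) → ℝ)
    (hψ : ∀ i, ContDiff ℝ 1 (ψ i))
    (h1 : ∀ i, (fun x => fderiv ℝ (ψ i) x (f x)) ∈ Submodule.span ℝ (Set.range ψ))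
    (h2 : ∀ (i : Fin M) (j : Fin n),
      (fun x => fderiv ℝ (ψ i) x (Pi.single j 1) * g x j) ∈
        Submodule.span ℝ (insert (fun _ => (1 : ℝ)) (Set.range ψ)))
    (h3 : ∀ p : Fin l, (fun x => h x p) ∈ Submodule.span ℝ (Set.range ψ)) :
    ∃ (A : Matrix (Fin M) (Fin M) ℝ) (B : Fin M → ℝ)
      (N : Matrix (Fin M) (Fin M) ℝ) (C : Matrix (Fin l) (Fin M) ℝ),
      (∀ (x : ℝ → (Fin n → ℝ)) (u v : ℝ → ℝ), Continuous u → Continuous v →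
        (∀ t, HasDerivAt x (f (x t) + (u t + v t) • g (x t)) t) →
        ∀ t, HasDerivAt (fun s => fun i => ψ i (x s))
          (A.mulVec (fun i => ψ i (x t)) + (u t + v t) • B
            + (u t + v t) • N.mulVec (fun i => ψ i (x t))) t) ∧
      (∀ x, h x = C.mulVec fun i => ψ i x) := by
  have key : ∀ F : (Fin n → ℝ) → ℝ, F ∈ Submodule.span ℝ (Set.range ψ) →
      ∃ c : Fin M → ℝ, ∀ x, F x = ∑ k, c k * ψ k x := by
    intro F hF
    obtain ⟨c, hc⟩ := (Submodule.mem_span_range_iff_exists_fun ℝ).1 hF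
    refine ⟨c, fun x => ?_⟩
    rw [← hc]
    simp [Finset.sum_apply]
  have hg : ∀ i, (fun x => fderiv ℝ (ψ i) x (g x)) ∈
      Submodule.span ℝ (insert (fun _ => (1 : ℝ)) (Set.range ψ)) := by
    intro i
    have e : (fun x => fderiv ℝ (ψ i) x (g x)) =
        ∑ j, (fun x => fderiv ℝ (ψ i) x (Pi.single j 1) * g x j) := by
      funext x
      rw [Finset.sum_apply]
      conv_lhs => rw [pi_eq_sum_univ' (g x)]
      rw [map_sum]
      refine Finset.sum_congr rfl fun j _ => ?_
      rw [map_smul, smul_eq_mul, mul_comm]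
    rw [e]
    exact Submodule.sum_mem _ fun j _ => h2 i j
  have hg' : ∀ i, ∃ (b : ℝ) (c : Fin M → ℝ), ∀ x,
      fderiv ℝ (ψ i) x (g x) = b + ∑ k, c k * ψ k x := by
    intro i
    obtain ⟨b, w, hw, e⟩ := Submodule.mem_span_insert.1 (hg i)
    obtain ⟨c, hc⟩ := key w hw
    refine ⟨b, c, fun x => ?_⟩
    have := congrFun e x
    simp only [Pi.add_apply, Pi.smul_apply, smul_eq_mul, mul_one] at this
    rw [this, hc]
  choose A hA using fun i => key _ (h1 i)
  choose B N hN using hg'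
  choose C hC using fun p => key _ (h3 p)
  refine ⟨A, B, N, C, ?_, ?_⟩
  · intro x u v _ _ hx t
    rw [hasDerivAt_pi]
    intro i
    have hd : HasFDerivAt (ψ i) (fderiv ℝ (ψ i) (x t)) (x t) :=
      (((hψ i).differentiable one_ne_zero) (x t)).hasFDerivAt
    have := hd.comp_hasDerivAt t (hx t)
    refine this.congr_deriv ?_
    rw [map_add, map_smul, hN i, hA i]
    simp only [Pi.add_apply, Pi.smul_apply, smul_eq_mul, Matrix.mulVec, dotProduct]
    ring
  · intro x
    funext p
    rw [hC p]
    rfl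
end

section
/- Let d ≥ 1, let W ∈ ℝ^{d×d} be symmetric positive definite, let T ∈ ℝ^{d×d} be symmetric, Y ∈ ℝ^{1×d}, and Ñ ∈ ℝ^{d×d}. Then the following are equivalent: (i) for every q ∈ ℝ^d with qᵀ W⁻¹ q ≤ 1, the symmetric matrix T + Yᵀ (Ñ q)ᵀ + (Ñ q) Y is negative definite; (ii) there exists ε > 0 such that the (d+1)×(d+1) symmetric block matrix [[T + ε Ñ W Ñᵀ, Yᵀ],[Y, −ε]] is negative definite. -/
open Matrix

lemma quad_expand {ι : Type*} [Fintype ι] (A : Matrix ι ι ℝ) (u v : ι → ℝ) (t : ℝ) :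
    (u + t • v) ⬝ᵥ A *ᵥ (u + t • v)
      = u ⬝ᵥ A *ᵥ u + t * (u ⬝ᵥ A *ᵥ v + v ⬝ᵥ A *ᵥ u) + t ^ 2 * (v ⬝ᵥ A *ᵥ v) := by
  simp only [mulVec_add, mulVec_smul, add_dotProduct, dotProduct_add, smul_dotProduct,
    dotProduct_smul, smul_eq_mul]
  ring

lemma s_pair {ι : Type*} [Fintype ι] (A B : Matrix ι ι ℝ)
    (h : ∀ v : ι → ℝ, 0 ≤ v ⬝ᵥ B *ᵥ v → v ⬝ᵥ A *ᵥ v ≤ 0)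
    (u v : ι → ℝ) (hu : u ⬝ᵥ B *ᵥ u < 0) (hv : 0 < v ⬝ᵥ B *ᵥ v) :
    (u ⬝ᵥ A *ᵥ u) * (v ⬝ᵥ B *ᵥ v) ≤ (u ⬝ᵥ B *ᵥ u) * (v ⬝ᵥ A *ᵥ v) := by
  have key : ∀ t : ℝ, u ⬝ᵥ B *ᵥ u + t * (u ⬝ᵥ B *ᵥ v + v ⬝ᵥ B *ᵥ u) + t ^ 2 * (v ⬝ᵥ B *ᵥ v) = 0 →
      u ⬝ᵥ A *ᵥ u + t * (u ⬝ᵥ A *ᵥ v + v ⬝ᵥ A *ᵥ u) + t ^ 2 * (v ⬝ᵥ A *ᵥ v) ≤ 0 := by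
    intro t ht
    rw [← quad_expand] at ht ⊢
    exact h _ ht.ge
  generalize u ⬝ᵥ A *ᵥ v + v ⬝ᵥ A *ᵥ u = f at key
  generalize u ⬝ᵥ B *ᵥ v + v ⬝ᵥ B *ᵥ u = g at key
  generalize u ⬝ᵥ A *ᵥ u = a at *
  generalize v ⬝ᵥ A *ᵥ v = c at *
  generalize u ⬝ᵥ B *ᵥ u = p at *
  generalize v ⬝ᵥ B *ᵥ v = r at *
  have hD : 0 < g ^ 2 - 4 * r * p := by nlinarith [mul_pos hv (neg_pos.2 hu), sq_nonneg g]
  obtain ⟨D, hDpos, hDD⟩ : ∃ D : ℝ, 0 < D ∧ D ^ 2 = g ^ 2 - 4 * r * p :=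
    ⟨_, Real.sqrt_pos.2 hD, Real.sq_sqrt hD.le⟩
  have hgD : |g| < D := abs_lt_of_sq_lt_sq (by nlinarith [mul_pos hv (neg_pos.2 hu)]) hDpos.le
  obtain ⟨hg1, hg2⟩ := abs_lt.1 hgD
  have k1 := key ((-g + D) / (2 * r)) (by field_simp; nlinarith)
  have k2 := key ((-g - D) / (2 * r)) (by field_simp; nlinarith)
  have hr : r ≠ 0 := hv.ne'
  have e1 : 4 * r ^ 2 * a + 2 * r * (-g + D) * f + (-g + D) ^ 2 * c ≤ 0 := by
    have := mul_nonpos_of_nonneg_of_nonpos (by positivity : 0 ≤ 4 * r ^ 2) k1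
    field_simp at this
    nlinarith
  have e2 : 4 * r ^ 2 * a + 2 * r * (-g - D) * f + (-g - D) ^ 2 * c ≤ 0 := by
    have := mul_nonpos_of_nonneg_of_nonpos (by positivity : 0 ≤ 4 * r ^ 2) k2
    field_simp at this
    nlinarith
  have e3 := add_nonpos (mul_nonpos_of_nonneg_of_nonpos (by linarith : 0 ≤ g + D) e1)
    (mul_nonpos_of_nonneg_of_nonpos (by linarith : 0 ≤ D - g) e2)
  have e4 : (8 * r * D) * (a * r - p * c) ≤ 0 := by
    have : (g + D) * (4 * r ^ 2 * a + 2 * r * (-g + D) * f + (-g + D) ^ 2 * c)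
      + (D - g) * (4 * r ^ 2 * a + 2 * r * (-g - D) * f + (-g - D) ^ 2 * c)
      = 8 * r ^ 2 * D * a + 2 * D * (D ^ 2 - g ^ 2) * c := by ring
    rw [this, hDD] at e3
    linarith
  have : a * r - p * c ≤ 0 := by
    by_contra hc
    push Not at hc
    have : 0 < (8 * r * D) * (a * r - p * c) := by positivity
    linarith
  linarith

lemma s_nonstrict {ι : Type*} [Fintype ι] (A B : Matrix ι ι ℝ)
    (h : ∀ v : ι → ℝ, 0 ≤ v ⬝ᵥ B *ᵥ v → v ⬝ᵥ A *ᵥ v ≤ 0)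
    (v0 : ι → ℝ) (hv0 : 0 < v0 ⬝ᵥ B *ᵥ v0) :
    ∃ ε : ℝ, 0 ≤ ε ∧ ∀ v : ι → ℝ, v ⬝ᵥ A *ᵥ v + ε * (v ⬝ᵥ B *ᵥ v) ≤ 0 := by
  obtain ⟨ε, h1, h2⟩ := exists_between_of_forall_le
    (s := {x : ℝ | x = 0 ∨ ∃ u : ι → ℝ, u ⬝ᵥ B *ᵥ u < 0 ∧
      x = (u ⬝ᵥ A *ᵥ u) / (-(u ⬝ᵥ B *ᵥ u))})
    (t := {x : ℝ | ∃ u : ι → ℝ, 0 < u ⬝ᵥ B *ᵥ u ∧ x = -(u ⬝ᵥ A *ᵥ u) / (u ⬝ᵥ B *ᵥ u)})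
    ⟨0, Or.inl rfl⟩ ⟨_, v0, hv0, rfl⟩ (by
      rintro x hx y ⟨v, hv, rfl⟩
      rcases hx with rfl | ⟨u, hu, rfl⟩
      · exact div_nonneg (by linarith [h v hv.le]) hv.le
      · rw [div_le_div_iff₀ (by linarith) hv]
        linarith [s_pair A B h u v hu hv])
  refine ⟨ε, h1 (Or.inl rfl), fun v => ?_⟩
  rcases lt_trichotomy (v ⬝ᵥ B *ᵥ v) 0 with hv | hv | hv
  · have := h1 (Or.inr ⟨v, hv, rfl⟩)
    rw [div_le_iff₀ (by linarith)] at this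
    linarith
  · rw [hv]; linarith [h v hv.ge]
  · have := h2 ⟨v, hv, rfl⟩
    rw [le_div_iff₀ hv] at this
    linarith

lemma s_strict {ι : Type*} [Fintype ι] [DecidableEq ι] (A B : Matrix ι ι ℝ)
    (h : ∀ v : ι → ℝ, v ≠ 0 → 0 ≤ v ⬝ᵥ B *ᵥ v → v ⬝ᵥ A *ᵥ v < 0)
    (v0 : ι → ℝ) (hne : v0 ≠ 0) (hv0 : 0 ≤ v0 ⬝ᵥ B *ᵥ v0) :
    ∃ ε : ℝ, 0 ≤ ε ∧ ∀ v : ι → ℝ, v ≠ 0 → v ⬝ᵥ A *ᵥ v + ε * (v ⬝ᵥ B *ᵥ v) < 0 := by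
  have pos : ∀ v : ι → ℝ, v ≠ 0 → 0 < v ⬝ᵥ v := fun v hv =>
    lt_of_le_of_ne (Finset.sum_nonneg fun i _ => mul_self_nonneg _)
      (fun h => hv (dotProduct_self_eq_zero.1 h.symm))
  have scale : ∀ (C : Matrix ι ι ℝ) (t : ℝ) (v : ι → ℝ),
      (t • v) ⬝ᵥ C *ᵥ (t • v) = t ^ 2 * (v ⬝ᵥ C *ᵥ v) := by
    intro C t v
    simp only [mulVec_smul, smul_dotProduct, dotProduct_smul, smul_eq_mul]
    ring
  have unit : ∀ v : ι → ℝ, v ≠ 0 → ∃ t : ℝ, t ≠ 0 ∧ t ^ 2 * (v ⬝ᵥ v) = 1 := by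
    intro v hv
    have := pos v hv
    refine ⟨(Real.sqrt (v ⬝ᵥ v))⁻¹, inv_ne_zero (Real.sqrt_pos.2 this).ne', ?_⟩
    rw [inv_pow, Real.sq_sqrt this.le, inv_mul_cancel₀ this.ne']
  have cpt : IsCompact {v : ι → ℝ | v ⬝ᵥ v = 1} := by
    refine Metric.isCompact_of_isClosed_isBounded
      (isClosed_eq (by unfold dotProduct; fun_prop) continuous_const) ?_
    refine (Metric.isBounded_closedBall (x := (0 : ι → ℝ)) (r := 1)).subset ?_
    intro v hv
    rw [mem_closedBall_zero_iff, pi_norm_le_iff_of_nonneg zero_le_one]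
    intro i
    have h1 : v i * v i ≤ v ⬝ᵥ v :=
      Finset.single_le_sum (f := fun i => v i * v i) (fun i _ => mul_self_nonneg _)
        (Finset.mem_univ i)
    have hv' : v ⬝ᵥ v = 1 := hv
    rw [hv'] at h1
    rw [Real.norm_eq_abs]
    exact abs_le.2 ⟨by nlinarith, by nlinarith⟩
  obtain ⟨δ, hδ, hδ'⟩ : ∃ δ : ℝ, 0 < δ ∧ ∀ v : ι → ℝ, v ⬝ᵥ v = 1 →
      min (v ⬝ᵥ A *ᵥ v) (v ⬝ᵥ B *ᵥ v) ≤ - δ := by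
    have ne : {v : ι → ℝ | v ⬝ᵥ v = 1}.Nonempty := by
      obtain ⟨t, _, ht⟩ := unit v0 hne
      refine ⟨t • v0, ?_⟩
      have := scale 1 t v0
      simp only [one_mulVec] at this
      exact this.trans ht
    obtain ⟨w, hw, hm⟩ := cpt.exists_isMaxOn ne
      (f := fun v => min (v ⬝ᵥ A *ᵥ v) (v ⬝ᵥ B *ᵥ v))
      (by unfold mulVec dotProduct; fun_prop)
    refine ⟨-min (w ⬝ᵥ A *ᵥ w) (w ⬝ᵥ B *ᵥ w), ?_, fun v hv => ?_⟩
    · have w0 : w ≠ 0 := by rintro rfl; simp at hw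
      rw [neg_pos, min_lt_iff]
      by_contra hc
      push Not at hc
      exact absurd (h w w0 hc.2) (not_lt.2 hc.1)
    · rw [neg_neg]; exact hm hv
  have quad : ∀ (C : Matrix ι ι ℝ) (v : ι → ℝ),
      v ⬝ᵥ (C + (δ / 2) • (1 : Matrix ι ι ℝ)) *ᵥ v = v ⬝ᵥ C *ᵥ v + δ / 2 * (v ⬝ᵥ v) := by
    intro C v
    simp [add_mulVec, smul_mulVec, dotProduct_add]
  obtain ⟨ε, hε, hε'⟩ := s_nonstrict (A + (δ / 2) • (1 : Matrix ι ι ℝ))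
    (B + (δ / 2) • (1 : Matrix ι ι ℝ)) (by
      intro v hv
      by_cases hv0 : v = 0
      · simp [hv0]
      rw [quad] at hv ⊢
      obtain ⟨t, ht0, ht⟩ := unit v hv0
      have h1 := scale 1 t v
      simp only [one_mulVec] at h1
      have h2 := hδ' (t • v) (h1.trans ht)
      rw [scale, scale, min_le_iff] at h2
      have t2 : 0 < t ^ 2 := by positivity
      have p : 0 ≤ t ^ 2 * (v ⬝ᵥ B *ᵥ v) + δ / 2 * (t ^ 2 * (v ⬝ᵥ v)) := by
        have := mul_nonneg t2.le hv
        linarith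
      rw [ht] at p
      have h3 : t ^ 2 * (v ⬝ᵥ A *ᵥ v) ≤ -δ := by
        rcases h2 with h2 | h2
        · exact h2
        · linarith
      by_contra hc
      push Not at hc
      have := mul_pos t2 hc
      have e : t ^ 2 * (v ⬝ᵥ A *ᵥ v + δ / 2 * (v ⬝ᵥ v))
        = t ^ 2 * (v ⬝ᵥ A *ᵥ v) + δ / 2 * (t ^ 2 * (v ⬝ᵥ v)) := by ring
      rw [e, ht] at this
      linarith) v0 (by
        rw [quad]
        have := mul_pos (half_pos hδ) (pos v0 hne)
        linarith)
  refine ⟨ε, hε, fun v hv => ?_⟩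
  have := hε' v
  rw [quad, quad] at this
  have p := mul_pos (half_pos hδ) (pos v hv)
  have p2 := mul_nonneg hε p.le
  linarith

lemma posDef_iff' {ι : Type*} [Fintype ι] (M : Matrix ι ι ℝ) :
    (-M).PosDef ↔ M.IsSymm ∧ ∀ x : ι → ℝ, x ≠ 0 → x ⬝ᵥ M *ᵥ x < 0 := by
  rw [posDef_iff_dotProduct_mulVec]
  have : (-M).IsHermitian ↔ M.IsSymm := by
    rw [IsHermitian, IsSymm, conjTranspose_eq_transpose_of_trivial, transpose_neg, neg_inj]
  rw [this]
  simp [neg_mulVec]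

lemma block_quad {d : ℕ} (P : Matrix (Fin d) (Fin d) ℝ) (Y : Fin d → ℝ) (c : ℝ)
    (v : Fin d ⊕ Fin 1 → ℝ) :
    v ⬝ᵥ (Matrix.fromBlocks P
          (Matrix.of fun i (_ : Fin 1) => Y i)
          (Matrix.of fun (_ : Fin 1) j => Y j)
          (Matrix.of fun (_ : Fin 1) (_ : Fin 1) => c)) *ᵥ v
      = (v ∘ Sum.inl) ⬝ᵥ P *ᵥ (v ∘ Sum.inl) + 2 * v (Sum.inr 0) * (Y ⬝ᵥ (v ∘ Sum.inl))
        + c * v (Sum.inr 0) ^ 2 := by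
  rw [fromBlocks_mulVec]
  have e : (of fun i (_ : Fin 1) => Y i) *ᵥ (v ∘ Sum.inr) = v (Sum.inr 0) • Y := by
    ext i; simp [mulVec, dotProduct, mul_comm]
  have e2 : (of fun (_ : Fin 1) j => Y j) *ᵥ (v ∘ Sum.inl) = fun _ => Y ⬝ᵥ (v ∘ Sum.inl) := by
    ext i; simp [mulVec, dotProduct]
  have e3 : (of fun (_ : Fin 1) (_ : Fin 1) => c) *ᵥ (v ∘ Sum.inr) = fun _ => c * v (Sum.inr 0) := by
    ext i; simp [mulVec, dotProduct]
  rw [e, e2, e3]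
  have e4 : ∀ (a : Fin d → ℝ) (b : Fin 1 → ℝ), v ⬝ᵥ Sum.elim a b
      = (v ∘ Sum.inl) ⬝ᵥ a + v (Sum.inr 0) * b 0 := by
    intro a b; simp [dotProduct]
  rw [e4, dotProduct_add, dotProduct_smul, dotProduct_comm (v ∘ Sum.inl) Y]
  simp only [Pi.add_apply, smul_eq_mul]
  ring


/-- Petersen-type lemma: negative definiteness of the state-dependent matrix
`T + Yᵀ (Ñ q)ᵀ + (Ñ q) Y` over the ellipsoid `{q : qᵀ W⁻¹ q ≤ 1}` is
equivalent to the existence of `ε > 0` such that the block matrix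
`[[T + ε Ñ W Ñᵀ, Yᵀ],[Y, −ε]]` is negative definite. -/
theorem petersen_lemma_ellipsoid
    (d : ℕ) (hd : 1 ≤ d)
    (W T Nt : Matrix (Fin d) (Fin d) ℝ) (Y : Fin d → ℝ)
    (hW : W.PosDef) (hT : T.IsSymm) :
    (∀ q : Fin d → ℝ, q ⬝ᵥ W⁻¹.mulVec q ≤ 1 →
      (-(T + Matrix.vecMulVec Y (Nt.mulVec q) + Matrix.vecMulVec (Nt.mulVec q) Y)).PosDef)
    ↔ (∃ ε : ℝ, 0 < ε ∧
      (-(Matrix.fromBlocks (T + ε • (Nt * W * Ntᵀ))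
          (Matrix.of fun i (_ : Fin 1) => Y i)
          (Matrix.of fun (_ : Fin 1) j => Y j)
          (Matrix.of fun (_ : Fin 1) (_ : Fin 1) => -ε))).PosDef) := by
  have hWs : Wᵀ = W := by
    have := hW.isHermitian
    rwa [IsHermitian, conjTranspose_eq_transpose_of_trivial] at this
  have hWu : IsUnit W.det := (Matrix.isUnit_iff_isUnit_det W).1 hW.isUnit
  have hbq : ∀ x : Fin d → ℝ, x ⬝ᵥ (Nt * W * Ntᵀ) *ᵥ x = (Ntᵀ *ᵥ x) ⬝ᵥ W *ᵥ (Ntᵀ *ᵥ x) := by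
    intro x
    rw [← mulVec_mulVec, ← mulVec_mulVec, dotProduct_mulVec, ← mulVec_transpose]
  have hb0 : ∀ x : Fin d → ℝ, 0 ≤ x ⬝ᵥ (Nt * W * Ntᵀ) *ᵥ x := by
    intro x
    rw [hbq]
    simpa using hW.posSemidef.dotProduct_mulVec_nonneg (Ntᵀ *ᵥ x)
  have hq : ∀ q x : Fin d → ℝ,
      x ⬝ᵥ (T + vecMulVec Y (Nt *ᵥ q) + vecMulVec (Nt *ᵥ q) Y) *ᵥ x
        = x ⬝ᵥ T *ᵥ x + 2 * (x ⬝ᵥ Nt *ᵥ q) * (Y ⬝ᵥ x) := by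
    intro q x
    simp only [add_mulVec, dotProduct_add, vecMulVec_mulVec, dotProduct_smul]
    simp only [MulOpposite.smul_eq_mul_unop, MulOpposite.unop_op]
    rw [dotProduct_comm (Nt *ᵥ q) x, dotProduct_comm x Y]
    ring
  have hxN : ∀ x q : Fin d → ℝ, x ⬝ᵥ Nt *ᵥ q = (Ntᵀ *ᵥ x) ⬝ᵥ q := by
    intro x q
    rw [dotProduct_mulVec, ← mulVec_transpose]
  have hTq : ∀ (ε : ℝ) (x : Fin d → ℝ), x ⬝ᵥ (T + ε • (Nt * W * Ntᵀ)) *ᵥ x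
      = x ⬝ᵥ T *ᵥ x + ε * (x ⬝ᵥ (Nt * W * Ntᵀ) *ᵥ x) := by
    intro ε x
    simp [add_mulVec, smul_mulVec, dotProduct_add]
  simp only [posDef_iff']
  constructor
  · intro h
    obtain ⟨ε, hε, hε'⟩ := s_strict
      (Matrix.fromBlocks T (Matrix.of fun i (_ : Fin 1) => Y i)
          (Matrix.of fun (_ : Fin 1) j => Y j) (Matrix.of fun (_ : Fin 1) (_ : Fin 1) => 0))
      (Matrix.fromBlocks (Nt * W * Ntᵀ) (Matrix.of fun i (_ : Fin 1) => (0 : Fin d → ℝ) i)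
          (Matrix.of fun (_ : Fin 1) j => (0 : Fin d → ℝ) j)
          (Matrix.of fun (_ : Fin 1) (_ : Fin 1) => -1))
      (by
        intro v hv hB
        rw [block_quad] at hB ⊢
        have hv' : v ∘ Sum.inl = 0 → v (Sum.inr 0) = 0 → False := by
          intro h1 h2
          apply hv
          ext i
          rcases i with i | i
          · exact congrFun h1 i
          · rw [Subsingleton.elim i 0]; exact h2
        generalize v ∘ Sum.inl = x at *
        generalize v (Sum.inr 0) = s at *
        simp only [zero_dotProduct, mul_zero, add_zero] at hB
        have hx : x ≠ 0 := by
          intro hx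
          refine hv' hx ?_
          rw [hx] at hB
          simp at hB
          nlinarith [sq_nonneg s]
        set b := x ⬝ᵥ (Nt * W * Ntᵀ) *ᵥ x with hb
        have hbb := hbq x
        have hWW : W⁻¹ *ᵥ W *ᵥ (Ntᵀ *ᵥ x) = Ntᵀ *ᵥ x := by
          rw [mulVec_mulVec, nonsing_inv_mul _ hWu, one_mulVec]
        have hs : s / b * b = s := by
          by_cases h0 : b = 0
          · rw [h0] at hB ⊢
            have : s = 0 := by nlinarith [sq_nonneg s]
            simp [this]
          · field_simp
        have := (h ((s / b) • W *ᵥ (Ntᵀ *ᵥ x)) (by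
          rw [mulVec_smul, hWW, smul_dotProduct, dotProduct_smul,
            dotProduct_comm, ← hbb, ← hb, smul_eq_mul, smul_eq_mul, hs]
          rw [div_mul_eq_mul_div]
          exact div_le_one_of_le₀ (by linarith) (hb0 x))).2 x hx
        rw [hq, hxN, dotProduct_smul, ← hbb, ← hb, smul_eq_mul, hs] at this
        linarith)
      (Sum.elim (fun _ => 1) 0)
      (by
        intro h0
        have := congrFun h0 (Sum.inl ⟨0, hd⟩)
        simp at this)
      (by
        rw [block_quad]
        simpa using hb0 _)
    have hpos : 0 < ε := by
      have := hε' (Sum.elim 0 (fun _ => 1)) (by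
        intro h0
        have := congrFun h0 (Sum.inr 0)
        simp at this)
      rw [block_quad, block_quad] at this
      simpa using this
    refine ⟨ε, hpos, ?_, ?_⟩
    · rw [IsSymm, fromBlocks_transpose]
      congr 1
      simp [transpose_add, transpose_mul, hT.eq, hWs, Matrix.mul_assoc]
    · intro v hv
      have := hε' v hv
      rw [block_quad, block_quad] at this
      rw [block_quad, hTq]
      simp only [zero_dotProduct, mul_zero, add_zero] at this
      linarith
  · rintro ⟨ε, hε, -, h⟩ q hq1
    refine ⟨?_, fun x hx => ?_⟩
    · rw [IsSymm, transpose_add, transpose_add, hT.eq, transpose_vecMulVec, transpose_vecMulVec]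
      abel
    · rw [hq]
      have h1 := h (Sum.elim x (fun _ => x ⬝ᵥ Nt *ᵥ q)) (by
        intro h0
        apply hx
        ext i
        exact congrFun h0 (Sum.inl i))
      rw [block_quad] at h1
      simp only [Sum.elim_comp_inl, Sum.elim_inr] at h1
      rw [hTq] at h1
      have hcs : (x ⬝ᵥ Nt *ᵥ q) ^ 2 ≤ x ⬝ᵥ (Nt * W * Ntᵀ) *ᵥ x := by
        by_cases hs : x ⬝ᵥ Nt *ᵥ q = 0
        · rw [hs]; simpa using hb0 x
        have hWW : W⁻¹ *ᵥ W *ᵥ (Ntᵀ *ᵥ x) = Ntᵀ *ᵥ x := by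
          rw [mulVec_mulVec, nonsing_inv_mul _ hWu, one_mulVec]
        have hWi : W⁻¹ᵀ = W⁻¹ := by rw [transpose_nonsing_inv, hWs]
        have hnn := hW.inv.posSemidef.dotProduct_mulVec_nonneg
          (q + (-(x ⬝ᵥ Nt *ᵥ q)⁻¹) • W *ᵥ (Ntᵀ *ᵥ x))
        rw [star_trivial, quad_expand, hWW, dotProduct_comm (W *ᵥ (Ntᵀ *ᵥ x)) (Ntᵀ *ᵥ x), ← hbq,
          dotProduct_mulVec (W *ᵥ (Ntᵀ *ᵥ x)), ← mulVec_transpose, hWi, hWW,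
          dotProduct_comm q (Ntᵀ *ᵥ x), ← hxN] at hnn
        generalize x ⬝ᵥ Nt *ᵥ q = s at *
        generalize x ⬝ᵥ (Nt * W * Ntᵀ) *ᵥ x = b at *
        have e : -s⁻¹ * (s + s) = -2 := by field_simp; norm_num
        rw [e] at hnn
        have h2 : 1 ≤ (-s⁻¹) ^ 2 * b := by linarith
        have s2 : 0 < s ^ 2 := by positivity
        have h3 := mul_le_mul_of_nonneg_left h2 s2.le
        have e2 : s ^ 2 * ((-s⁻¹) ^ 2 * b) = b := by field_simp
        linarith
      have := mul_le_mul_of_nonneg_left hcs hε.le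
      linarith
end

section
/- Let d ≥ 1, W ∈ ℝ^{d×d} symmetric positive definite, A_c, Ñ ∈ ℝ^{d×d}, and H̃ ∈ ℝ^{1×d}. Assume that for every q ∈ ℝ^d with qᵀ W⁻¹ q ≤ 1, the symmetric matrix A_cᵀ W⁻¹ + W⁻¹ A_c + H̃ᵀ (Ñ q)ᵀ W⁻¹ + W⁻¹ (Ñ q) H̃ is negative definite. Then for every differentiable curve p : [0,∞) → ℝ^d satisfying p'(t) = A_c p(t) + (H̃ p(t))·(Ñ p(t)) for all t ≥ 0 and p(0)ᵀ W⁻¹ p(0) ≤ 1, it holds that p(t)ᵀ W⁻¹ p(t) ≤ 1 for all t ≥ 0 (the ellipsoid is forward invariant) and p(t) → 0 as t → ∞. -/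
open Matrix

lemma compact_compare {d : ℕ} {X : Type*} [TopologicalSpace X] (K : Set X) (hK : IsCompact K)
    (F G : X → (Fin d → ℝ) → ℝ)
    (hF : Continuous fun z : X × (Fin d → ℝ) => F z.1 z.2)
    (hG : Continuous fun z : X × (Fin d → ℝ) => G z.1 z.2)
    (hF2 : ∀ q (r : ℝ) x, F q (r • x) = r ^ 2 * F q x)
    (hG2 : ∀ q (r : ℝ) x, G q (r • x) = r ^ 2 * G q x)
    (hFp : ∀ q ∈ K, ∀ x, x ≠ 0 → 0 < F q x)
    (hGp : ∀ q ∈ K, ∀ x, x ≠ 0 → 0 < G q x) :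
    ∃ c : ℝ, 0 < c ∧ ∀ q ∈ K, ∀ x, c * F q x ≤ G q x := by
  have hS : IsCompact (K ×ˢ Metric.sphere (0 : Fin d → ℝ) 1) := hK.prod (isCompact_sphere _ _)
  have hne : ∀ x ∈ Metric.sphere (0 : Fin d → ℝ) 1, x ≠ 0 := by
    rintro x hx rfl
    simp at hx
  have key : ∃ c : ℝ, 0 < c ∧ ∀ q ∈ K, ∀ x ∈ Metric.sphere (0 : Fin d → ℝ) 1,
      c * F q x ≤ G q x := by
    rcases (K ×ˢ Metric.sphere (0 : Fin d → ℝ) 1).eq_empty_or_nonempty with he | hn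
    · refine ⟨1, one_pos, fun q hq x hx => ?_⟩
      have : (q, x) ∈ K ×ˢ Metric.sphere (0 : Fin d → ℝ) 1 := ⟨hq, hx⟩
      rw [he] at this
      exact this.elim
    · obtain ⟨z, hz, hmin⟩ := hS.exists_isMinOn hn
        (f := fun z : X × (Fin d → ℝ) => G z.1 z.2 / F z.1 z.2)
        (hG.continuousOn.div hF.continuousOn
          (fun z hz => (hFp z.1 hz.1 z.2 (hne _ hz.2)).ne'))
      refine ⟨_, div_pos (hGp z.1 hz.1 z.2 (hne _ hz.2)) (hFp z.1 hz.1 z.2 (hne _ hz.2)),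
        fun q hq x hx => ?_⟩
      have h := hmin (show (q, x) ∈ K ×ˢ Metric.sphere (0 : Fin d → ℝ) 1 from ⟨hq, hx⟩)
      exact (le_div_iff₀ (hFp q hq x (hne x hx))).1 h
  obtain ⟨c, hc, h⟩ := key
  refine ⟨c, hc, fun q hq x => ?_⟩
  by_cases hx : x = 0
  · have h1 := hF2 q 0 0
    have h2 := hG2 q 0 0
    simp at h1 h2
    simp [hx, h1, h2]
  · have hx' : ‖x‖ ≠ 0 := norm_ne_zero_iff.2 hx
    have h1 := h q hq (‖x‖⁻¹ • x) (by simp [norm_smul, hx'])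
    have h2 : x = ‖x‖ • (‖x‖⁻¹ • x) := by rw [smul_smul, mul_inv_cancel₀ hx', one_smul]
    rw [h2, hF2, hG2]
    nlinarith [mul_le_mul_of_nonneg_left h1 (sq_nonneg ‖x‖)]

/-- Lyapunov convergence argument: if the state-dependent matrix
`A_cᵀ W⁻¹ + W⁻¹ A_c + H̃ᵀ (Ñ q)ᵀ W⁻¹ + W⁻¹ (Ñ q) H̃` is negative definite for
every `q` in the ellipsoid `{q : qᵀ W⁻¹ q ≤ 1}`, then every solution of
`ṗ = A_c p + (H̃ p)(Ñ p)` starting in the ellipsoid stays in the ellipsoid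
and converges to the origin. -/
theorem regional_asymptotic_stability
    (d : ℕ) (hd : 1 ≤ d)
    (W Ac Nt : Matrix (Fin d) (Fin d) ℝ) (Ht : Fin d → ℝ)
    (hW : W.PosDef)
    (hneg : ∀ q : Fin d → ℝ, q ⬝ᵥ W⁻¹.mulVec q ≤ 1 →
      (-(Acᵀ * W⁻¹ + W⁻¹ * Ac
        + Matrix.vecMulVec Ht (Matrix.vecMul (Nt.mulVec q) W⁻¹)
        + Matrix.vecMulVec (W⁻¹.mulVec (Nt.mulVec q)) Ht)).PosDef)
    (p : ℝ → Fin d → ℝ)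
    (hp : ∀ t, 0 ≤ t → HasDerivAt p (Ac.mulVec (p t) + (Ht ⬝ᵥ p t) • Nt.mulVec (p t)) t)
    (h0 : p 0 ⬝ᵥ W⁻¹.mulVec (p 0) ≤ 1) :
    (∀ t, 0 ≤ t → p t ⬝ᵥ W⁻¹.mulVec (p t) ≤ 1) ∧
    Filter.Tendsto p Filter.atTop (nhds 0) := by
  set P := W⁻¹ with hP
  have hPd : P.PosDef := hW.inv
  have hPs : ∀ x y : Fin d → ℝ, x ⬝ᵥ P.mulVec y = y ⬝ᵥ P.mulVec x := by
    intro x y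
    have hT : Pᵀ = P := by simpa [Matrix.IsHermitian] using hPd.isHermitian
    rw [dotProduct_mulVec, ← mulVec_transpose, hT, dotProduct_comm]
  have hVpos : ∀ x : Fin d → ℝ, x ≠ 0 → 0 < x ⬝ᵥ P.mulVec x := by
    intro x hx
    simpa using hPd.dotProduct_mulVec_pos hx
  have hV2 : ∀ (r : ℝ) (x : Fin d → ℝ), (r • x) ⬝ᵥ P.mulVec (r • x) = r ^ 2 * (x ⬝ᵥ P.mulVec x) := by
    intro r x
    simp only [mulVec_smul, dotProduct_smul, smul_dotProduct, smul_eq_mul]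
    ring
  have hVc : Continuous fun x : Fin d → ℝ => x ⬝ᵥ P.mulVec x := by fun_prop
  obtain ⟨m, hm, hmV⟩ := compact_compare ({0} : Set ℝ) isCompact_singleton
    (fun _ x => ‖x‖ ^ 2) (fun _ x => x ⬝ᵥ P.mulVec x) (by fun_prop)
    (hVc.comp continuous_snd)
    (by intro _ r x; simp [norm_smul, mul_pow]) (fun _ => hV2)
    (by intro _ _ x hx; have := norm_pos_iff.2 hx; positivity) (fun _ _ => hVpos)
  replace hmV : ∀ x : Fin d → ℝ, m * ‖x‖ ^ 2 ≤ x ⬝ᵥ P.mulVec x := hmV 0 rfl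
  have hE : IsCompact {q : Fin d → ℝ | q ⬝ᵥ P.mulVec q ≤ 1} := by
    apply Metric.isCompact_of_isClosed_isBounded (isClosed_le hVc continuous_const)
    refine (Metric.isBounded_closedBall (x := (0 : Fin d → ℝ)) (r := 1 / m + 1)).subset ?_
    intro q hq
    have h1 : ‖q‖ ^ 2 ≤ 1 / m := by
      rw [le_div_iff₀ hm]
      have := hmV q
      have : q ⬝ᵥ P.mulVec q ≤ 1 := hq
      linarith
    rw [mem_closedBall_zero_iff]
    nlinarith [sq_nonneg (‖q‖ - 1), norm_nonneg q, sq_nonneg ‖q‖]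
  -- the quadratic form of the state-dependent matrix
  have hform : ∀ q x : Fin d → ℝ, x ⬝ᵥ (-(Acᵀ * P + P * Ac
        + Matrix.vecMulVec Ht (Matrix.vecMul (Nt.mulVec q) P)
        + Matrix.vecMulVec (P.mulVec (Nt.mulVec q)) Ht)).mulVec x
      = -(2 * (x ⬝ᵥ P.mulVec (Ac.mulVec x + (Ht ⬝ᵥ x) • Nt.mulVec q))) := by
    intro q x
    have e1 : x ⬝ᵥ (Acᵀ * P).mulVec x = x ⬝ᵥ P.mulVec (Ac.mulVec x) := by
      rw [← mulVec_mulVec, dotProduct_mulVec, vecMul_transpose, hPs]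
    have e2 : (Nt.mulVec q ᵥ* P) ⬝ᵥ x = x ⬝ᵥ P.mulVec (Nt.mulVec q) := by
      rw [← dotProduct_mulVec, hPs]
    have e3 : x ⬝ᵥ (vecMulVec Ht (Nt.mulVec q ᵥ* P)).mulVec x
        = (Ht ⬝ᵥ x) * (x ⬝ᵥ P.mulVec (Nt.mulVec q)) := by
      rw [vecMulVec_mulVec, e2, dotProduct_comm Ht x]
      simp [mul_comm]
    have e4 : x ⬝ᵥ (vecMulVec (P.mulVec (Nt.mulVec q)) Ht).mulVec x
        = (Ht ⬝ᵥ x) * (x ⬝ᵥ P.mulVec (Nt.mulVec q)) := by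
      rw [vecMulVec_mulVec]
      simp [mul_comm]
    rw [neg_mulVec, dotProduct_neg, add_mulVec, add_mulVec, add_mulVec, dotProduct_add,
      dotProduct_add, dotProduct_add, e1, e3, e4, ← mulVec_mulVec, mulVec_add, mulVec_smul,
      dotProduct_add, dotProduct_smul, smul_eq_mul]
    ring
  obtain ⟨c, hc, hcV⟩ := compact_compare {q : Fin d → ℝ | q ⬝ᵥ P.mulVec q ≤ 1} hE
    (fun _ x => x ⬝ᵥ P.mulVec x)
    (fun q x => -(2 * (x ⬝ᵥ P.mulVec (Ac.mulVec x + (Ht ⬝ᵥ x) • Nt.mulVec q))))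
    (hVc.comp continuous_snd) (by fun_prop) (fun _ => hV2)
    (by
      intro q r x
      simp only [mulVec_smul, dotProduct_smul, smul_dotProduct, smul_eq_mul, mulVec_add,
        dotProduct_add]
      ring)
    (fun _ _ => hVpos)
    (by
      intro q hq x hx
      have h := (hneg q hq).dotProduct_mulVec_pos hx
      rw [star_trivial, hform] at h
      exact h)
  -- derivative of the Lyapunov function along the curve
  have hder : ∀ t, 0 ≤ t → HasDerivAt (fun s => p s ⬝ᵥ P.mulVec (p s))
      (2 * (p t ⬝ᵥ P.mulVec (Ac.mulVec (p t) + (Ht ⬝ᵥ p t) • Nt.mulVec (p t)))) t := by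
    intro t ht
    have h := hp t ht
    set v := Ac.mulVec (p t) + (Ht ⬝ᵥ p t) • Nt.mulVec (p t) with hv
    have hi := hasDerivAt_pi.1 h
    have hsum : HasDerivAt (fun s => ∑ i, p s i * ∑ j, P i j * p s j)
        (∑ i, (v i * (∑ j, P i j * p t j) + p t i * ∑ j, P i j * v j)) t := by
      apply HasDerivAt.fun_sum
      intro i _
      apply (hi i).mul
      apply HasDerivAt.fun_sum
      intro j _
      exact (hi j).const_mul _
    have e : 2 * (p t ⬝ᵥ P.mulVec v)
        = ∑ i, (v i * (∑ j, P i j * p t j) + p t i * ∑ j, P i j * v j) := by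
      rw [Finset.sum_add_distrib]
      change _ = v ⬝ᵥ P.mulVec (p t) + p t ⬝ᵥ P.mulVec v
      rw [hPs v]
      ring
    rw [e]
    exact hsum
  have hBle : ∀ t : ℝ, 0 ≤ t → Real.exp (-(c / 2) * t) ≤ 1 := by
    intro t ht
    rw [Real.exp_le_one_iff]
    have : 0 ≤ c / 2 * t := by positivity
    linarith
  have hmain : ∀ t, 0 ≤ t → p t ⬝ᵥ P.mulVec (p t) ≤ Real.exp (-(c / 2) * t) := by
    intro T hT
    have hB : ∀ t : ℝ, HasDerivAt (fun t => Real.exp (-(c / 2) * t))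
        (Real.exp (-(c / 2) * t) * (-(c / 2))) t := by
      intro t
      simpa using ((hasDerivAt_id t).const_mul (-(c / 2))).exp
    refine image_le_of_deriv_right_lt_deriv_boundary
      (f := fun s => p s ⬝ᵥ P.mulVec (p s)) (a := 0) (b := T)
      (fun t ht => (hder t ht.1).continuousAt.continuousWithinAt)
      (fun t ht => (hder t ht.1).hasDerivWithinAt) (by simpa using h0) hB ?_ ⟨hT, le_rfl⟩
    intro t ht heq
    have heq' : p t ⬝ᵥ P.mulVec (p t) = Real.exp (-(c / 2) * t) := heq
    have h1 := hcV (p t) (by rw [Set.mem_setOf_eq, heq']; exact hBle t ht.1) (p t)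
    have hpos := Real.exp_pos (-(c / 2) * t)
    simp only [heq'] at h1
    nlinarith [mul_pos hc hpos]
  refine ⟨fun t ht => (hmain t ht).trans (hBle t ht), ?_⟩
  rw [tendsto_zero_iff_norm_tendsto_zero]
  have hexp : Filter.Tendsto (fun t : ℝ => Real.sqrt (Real.exp (-(c / 2) * t) / m))
      Filter.atTop (nhds 0) := by
    have h1 : Filter.Tendsto (fun t : ℝ => -(c / 2) * t) Filter.atTop Filter.atBot :=
      Filter.tendsto_id.const_mul_atTop_of_neg (by linarith)
    have h2 := ((Real.tendsto_exp_atBot.comp h1).div_const m).sqrt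
    simpa using h2
  refine squeeze_zero' (Filter.Eventually.of_forall fun t => norm_nonneg _) ?_ hexp
  filter_upwards [Filter.eventually_ge_atTop 0] with t ht
  apply Real.le_sqrt_of_sq_le
  rw [le_div_iff₀ hm]
  linarith [hmV (p t), hmain t ht]
end

section
/- (Proposition 1.) Consider the bilinear system ż = Az + B(u+v) + (u+v)Nz, y = Cz (A, N ∈ ℝ^{M×M}, B ∈ ℝ^M, C ∈ ℝ^{l×M}), with matched disturbance v generated by the exosystem ẇ = Sw, v = Ew (S ∈ ℝ^{r×r}, E ∈ ℝ^{1×r}), and the linear dynamic output feedback controller ξ' = Fξ + Gy, u = Hξ + Γy (F ∈ ℝ^{ν×ν}, G ∈ ℝ^{ν×l}, H ∈ ℝ^{1×ν}, Γ ∈ ℝ^{1×l}). Let A_c = [[A + BΓC, BH],[GC, F]] ∈ ℝ^{(M+ν)×(M+ν)}, Ñ = [[N,0],[0,0]], H̃ = [ΓC, H]. Suppose: (1) there exists Σ ∈ ℝ^{ν×r} with Σ S = F Σ; (2) H Σ + E = 0; (3) there exist ε > 0 and a symmetric positive definite W ∈ ℝ^{(M+ν)×(M+ν)} such that the block matrix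 [[W A_cᵀ + A_c W + ε Ñ W Ñᵀ, W H̃ᵀ],[H̃ W, −ε]] is negative definite. Then for every differentiable triple (z, ξ, w) : [0,∞) → ℝ^M × ℝ^ν × ℝ^r satisfying the closed-loop equations z' = Az + B(Hξ + ΓCz + Ew) + (Hξ + ΓCz + Ew)·Nz, ξ' = Fξ + G C z, w' = Sw, with initial condition p(0) = (z(0), ξ(0) − Σ w(0)) satisfying p(0)ᵀ W⁻¹ p(0) ≤ 1, it holds that (z(t), ξ(t) − Σ w(t)) → 0 and in particular the output y(t) = C z(t) → 0 as t → ∞. -/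
open Matrix

theorem rbor_scale {n : Type*} [Fintype n] (f g : (n → ℝ) → ℝ) (hf : Continuous f)
    (hg : Continuous g) (hfs : ∀ (r : ℝ) x, f (r • x) = r ^ 2 * f x)
    (hgs : ∀ (r : ℝ) x, g (r • x) = r ^ 2 * g x) (hpos : ∀ x, x ≠ 0 → 0 < f x) :
    ∃ c : ℝ, 0 < c ∧ ∀ x, c * g x ≤ f x := by
  have key : ∃ c : ℝ, 0 < c ∧ ∀ x ∈ Metric.sphere (0 : n → ℝ) 1, c * g x ≤ f x := by
    have hc : IsCompact (Metric.sphere (0 : n → ℝ) 1) := isCompact_sphere _ _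
    rcases (Metric.sphere (0 : n → ℝ) 1).eq_empty_or_nonempty with he | hne
    · exact ⟨1, one_pos, by simp [he]⟩
    · obtain ⟨a, ha, hmin⟩ := hc.exists_isMinOn hne hf.continuousOn
      obtain ⟨b, hb, hmax⟩ := hc.exists_isMaxOn hne hg.continuousOn
      have ha0 : a ≠ 0 := by
        rintro rfl
        simp at ha
      have hfa := hpos a ha0
      have hK : 0 < |g b| + 1 := by positivity
      refine ⟨f a / (|g b| + 1), by positivity, fun x hx => ?_⟩
      have h1 : f a ≤ f x := hmin hx
      have h2 : g x ≤ g b := hmax hx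
      have h3 : g x ≤ |g b| + 1 := by linarith [le_abs_self (g b)]
      calc f a / (|g b| + 1) * g x ≤ f a / (|g b| + 1) * (|g b| + 1) := by gcongr
        _ = f a := by field_simp
        _ ≤ f x := h1
  obtain ⟨c, hc, h⟩ := key
  refine ⟨c, hc, fun x => ?_⟩
  by_cases hx : x = 0
  · have h1 := hfs 0 x
    have h2 := hgs 0 x
    simp at h1 h2
    rw [hx, h1, h2]; simp
  · have hn : ‖x‖ ≠ 0 := norm_ne_zero_iff.mpr hx
    have h1 := h (‖x‖⁻¹ • x) (by simp [norm_smul, hn])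
    have hx' : x = ‖x‖ • (‖x‖⁻¹ • x) := by rw [smul_smul, mul_inv_cancel₀ hn, one_smul]
    rw [hx', hfs, hgs]
    nlinarith [sq_nonneg ‖x‖]

theorem rbor_mulVec_deriv {m n : Type*} [Fintype m] [Fintype n] (P : Matrix m n ℝ)
    {p : ℝ → n → ℝ} {p' : n → ℝ} {t : ℝ} (hp : HasDerivAt p p' t) :
    HasDerivAt (fun t => P *ᵥ p t) (P *ᵥ p') t := by
  classical
  exact (P.mulVecLin.toContinuousLinearMap).hasFDerivAt.comp_hasDerivAt t hp

theorem rbor_dot_deriv {n : Type*} [Fintype n]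
    {p q : ℝ → n → ℝ} {p' q' : n → ℝ} {t : ℝ} (hp : HasDerivAt p p' t)
    (hq : HasDerivAt q q' t) :
    HasDerivAt (fun t => p t ⬝ᵥ q t) (p' ⬝ᵥ q t + p t ⬝ᵥ q') t := by
  simp only [dotProduct, ← Finset.sum_add_distrib]
  exact HasDerivAt.fun_sum fun i _ => (hasDerivAt_pi.1 hp i).mul (hasDerivAt_pi.1 hq i)

/-- Stability of the error dynamics on the ellipsoid. -/
theorem rbor_core {n : Type*} [Fintype n] [DecidableEq n]
    (Ac Nt W : Matrix n n ℝ) (Ht : n → ℝ) (ε : ℝ) (hε : 0 < ε) (hW : W.PosDef)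
    (hLMI : (-(Matrix.fromBlocks (W * Acᵀ + Ac * W + ε • (Nt * W * Ntᵀ))
        (Matrix.of fun i (_ : Fin 1) => W.mulVec Ht i)
        (Matrix.of fun (_ : Fin 1) j => Matrix.vecMul Ht W j)
        (Matrix.of fun (_ : Fin 1) (_ : Fin 1) => -ε))).PosDef)
    (p : ℝ → n → ℝ)
    (hp : ∀ t, 0 ≤ t → HasDerivAt p (Ac *ᵥ p t + (Ht ⬝ᵥ p t) • Nt *ᵥ p t) t)
    (h0 : p 0 ⬝ᵥ W⁻¹ *ᵥ p 0 ≤ 1) :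
    Filter.Tendsto p Filter.atTop (nhds 0) := by
  have hWT : Wᵀ = W := by simpa using hW.isHermitian.eq
  have hdet : IsUnit W.det := hW.isUnit.map Matrix.detMonoidHom
  have hWsym : ∀ x y, x ⬝ᵥ W *ᵥ y = y ⬝ᵥ W *ᵥ x := fun x y => by
    rw [dotProduct_mulVec, ← mulVec_transpose, hWT, dotProduct_comm]
  have hPT : (W⁻¹)ᵀ = W⁻¹ := by rw [transpose_nonsing_inv, hWT]
  have hWP : ∀ x, W *ᵥ (W⁻¹ *ᵥ x) = x := fun x => by
    rw [mulVec_mulVec, mul_nonsing_inv _ hdet, one_mulVec]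
  -- the dissipation form
  let f : (n → ℝ) → ℝ := fun q =>
    -(2 * (q ⬝ᵥ Ac *ᵥ (W *ᵥ q)) + ε * ((Ntᵀ *ᵥ q) ⬝ᵥ W *ᵥ (Ntᵀ *ᵥ q)) + (Ht ⬝ᵥ W *ᵥ q) ^ 2 / ε)
  let g : (n → ℝ) → ℝ := fun q => q ⬝ᵥ W *ᵥ q
  have hfpos : ∀ q, q ≠ 0 → 0 < f q := by
    intro q hq
    have h := hLMI.dotProduct_mulVec_pos
      (x := Sum.elim q (fun _ : Fin 1 => (Ht ⬝ᵥ W *ᵥ q) / ε)) (by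
        intro h
        apply hq
        funext i
        exact congrFun h (Sum.inl i))
    simp only [neg_mulVec, dotProduct_neg, star_trivial, fromBlocks_mulVec] at h
    have e1 : q ⬝ᵥ (W * Acᵀ) *ᵥ q = q ⬝ᵥ Ac *ᵥ (W *ᵥ q) := by
      rw [← mulVec_mulVec, hWsym, mulVec_transpose, dotProduct_mulVec q]
    have e2 : q ⬝ᵥ (Nt * W * Ntᵀ) *ᵥ q = (Ntᵀ *ᵥ q) ⬝ᵥ W *ᵥ (Ntᵀ *ᵥ q) := by
      rw [← mulVec_mulVec, ← mulVec_mulVec, dotProduct_mulVec, mulVec_transpose]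
    have e3 : (Matrix.of fun i (_ : Fin 1) => (W *ᵥ Ht) i) *ᵥ
        (fun _ : Fin 1 => (Ht ⬝ᵥ W *ᵥ q) / ε) = ((Ht ⬝ᵥ W *ᵥ q) / ε) • (W *ᵥ Ht) := by
      funext i
      simp [mulVec, dotProduct, mul_comm]
    have e4 : (Matrix.of fun (_ : Fin 1) j => (Ht ᵥ* W) j) *ᵥ q =
        fun _ => Ht ⬝ᵥ W *ᵥ q := by
      funext i
      rw [dotProduct_mulVec]
      rfl
    have e5 : (Matrix.of fun (_ : Fin 1) (_ : Fin 1) => -ε) *ᵥ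
        (fun _ : Fin 1 => (Ht ⬝ᵥ W *ᵥ q) / ε) = fun _ => - (Ht ⬝ᵥ W *ᵥ q) := by
      funext i
      simp [mulVec, dotProduct]
      field_simp
    have e6 : q ⬝ᵥ (Ac * W) *ᵥ q = q ⬝ᵥ Ac *ᵥ (W *ᵥ q) := by rw [mulVec_mulVec]
    simp only [Sum.elim_comp_inl, Sum.elim_comp_inr, e3, e4, e5] at h
    rw [sumElim_dotProduct_sumElim] at h
    simp only [add_mulVec, smul_mulVec, dotProduct_add, dotProduct_smul, e1, e2, e6,
      hWsym q Ht, smul_eq_mul] at h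
    have e7 : (fun _ : Fin 1 => (Ht ⬝ᵥ W *ᵥ q) / ε) ⬝ᵥ (fun _ : Fin 1 => Ht ⬝ᵥ W *ᵥ q) =
      (Ht ⬝ᵥ W *ᵥ q) ^ 2 / ε := by simp [dotProduct]; ring
    have e8 : (fun _ : Fin 1 => (Ht ⬝ᵥ W *ᵥ q) / ε) ⬝ᵥ (fun _ : Fin 1 => -(Ht ⬝ᵥ W *ᵥ q)) =
      -((Ht ⬝ᵥ W *ᵥ q) ^ 2 / ε) := by simp [dotProduct]; ring
    rw [e7, e8] at h
    have e9 : (Ht ⬝ᵥ W *ᵥ q) / ε * (Ht ⬝ᵥ W *ᵥ q) = (Ht ⬝ᵥ W *ᵥ q) ^ 2 / ε := by ring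
    rw [e9] at h
    simp only [f]
    linarith
  have hfc : Continuous f := by fun_prop
  have hgc : Continuous g := by fun_prop
  obtain ⟨c, hc, hcf⟩ := rbor_scale f g hfc hgc
    (fun r x => by simp only [f, mulVec_smul, smul_dotProduct, dotProduct_smul, smul_eq_mul]; ring)
    (fun r x => by simp only [g, mulVec_smul, smul_dotProduct, dotProduct_smul, smul_eq_mul]; ring)
    hfpos
  obtain ⟨k, hk, hkV⟩ := rbor_scale (fun x => x ⬝ᵥ W⁻¹ *ᵥ x) (fun x => ‖x‖ ^ 2)
    (by fun_prop) (by fun_prop)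
    (fun r x => by simp only [mulVec_smul, smul_dotProduct, dotProduct_smul, smul_eq_mul]; ring)
    (fun r x => by simp only [norm_smul, mul_pow, Real.norm_eq_abs, sq_abs])
    (fun x hx => by simpa using hW.inv.dotProduct_mulVec_pos hx)
  let V : ℝ → ℝ := fun t => p t ⬝ᵥ W⁻¹ *ᵥ p t
  let V' : ℝ → ℝ := fun t => 2 * ((W⁻¹ *ᵥ p t) ⬝ᵥ (Ac *ᵥ p t + (Ht ⬝ᵥ p t) • Nt *ᵥ p t))
  have hV : ∀ t, 0 ≤ t → HasDerivAt V (V' t) t := by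
    intro t ht
    have h := rbor_dot_deriv (hp t ht) (rbor_mulVec_deriv W⁻¹ (hp t ht))
    convert h using 1
    simp only [V']
    set d := Ac *ᵥ p t + (Ht ⬝ᵥ p t) • Nt *ᵥ p t
    rw [dotProduct_mulVec (p t), ← mulVec_transpose, hPT, dotProduct_comm d]
    ring
  have hV' : ∀ t, V t ≤ 1 → V' t ≤ -c * V t := by
    intro t h1
    set q := W⁻¹ *ᵥ p t with hq
    have hpq : p t = W *ᵥ q := (hWP _).symm
    have hVg : V t = g q := by
      simp only [V, g]
      rw [← hq, ← hpq, dotProduct_comm]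
    have hfq := hcf q
    have hs := hW.posSemidef.dotProduct_mulVec_nonneg (ε • (Ntᵀ *ᵥ q) - (Ht ⬝ᵥ W *ᵥ q) • q)
    set s := Ht ⬝ᵥ W *ᵥ q with hsdef
    set a := Ntᵀ *ᵥ q with ha
    simp only [star_trivial, mulVec_sub, mulVec_smul, sub_dotProduct, dotProduct_sub,
      smul_dotProduct, dotProduct_smul, smul_eq_mul, hWsym q a] at hs
    have e1 : q ⬝ᵥ Nt *ᵥ (W *ᵥ q) = a ⬝ᵥ W *ᵥ q := by
      rw [dotProduct_mulVec, ha, mulVec_transpose]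
    have e2 : V' t = 2 * (q ⬝ᵥ Ac *ᵥ (W *ᵥ q)) + 2 * (s * (a ⬝ᵥ W *ᵥ q)) := by
      simp only [V']
      rw [← hq, hpq, ← hsdef, dotProduct_add, dotProduct_smul, e1, smul_eq_mul]
      ring
    rw [hVg] at h1 ⊢
    rw [e2]
    simp only [f, ← hsdef, ← ha] at hfq
    have h2 : 2 * (s * (a ⬝ᵥ W *ᵥ q)) ≤ ε * (a ⬝ᵥ W *ᵥ a) + s ^ 2 / ε * g q := by
      have : 0 ≤ (ε * (ε * (a ⬝ᵥ W *ᵥ a) + s ^ 2 / ε * g q - 2 * (s * (a ⬝ᵥ W *ᵥ q)))) := by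
        have : ε * (ε * (a ⬝ᵥ W *ᵥ a) + s ^ 2 / ε * g q - 2 * (s * (a ⬝ᵥ W *ᵥ q))) =
          ε * (ε * (a ⬝ᵥ W *ᵥ a)) + s ^ 2 * g q - 2 * ε * (s * (a ⬝ᵥ W *ᵥ q)) := by
          field_simp
        rw [this]
        simp only [g]
        linarith
      have := nonneg_of_mul_nonneg_right this hε
      linarith
    have h3 : s ^ 2 / ε * g q ≤ s ^ 2 / ε := mul_le_of_le_one_right (by positivity) h1
    linarith
  have hdecay : ∀ T, 0 ≤ T → V T ≤ Real.exp (-(c / 2) * T) := by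
    intro T hT
    refine image_le_of_deriv_right_lt_deriv_boundary (f := V) (f' := V') (a := 0) (b := T)
      (B := fun t => Real.exp (-(c / 2) * t))
      (B' := fun t => Real.exp (-(c / 2) * t) * (-(c / 2)))
      (fun t ht => (hV t ht.1).continuousAt.continuousWithinAt)
      (fun t ht => (hV t ht.1).hasDerivWithinAt) (by simpa [V] using h0) ?_ ?_ ⟨hT, le_rfl⟩
    · intro t
      have := ((hasDerivAt_id t).const_mul (-(c / 2))).exp
      simpa using this
    · intro t ht heq
      have hle : Real.exp (-(c / 2) * t) ≤ 1 := by
        apply Real.exp_le_one_iff.2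
        nlinarith [ht.1]
      have h1 := hV' t (heq.trans_le hle)
      rw [heq] at h1
      have := Real.exp_pos (-(c / 2) * t)
      nlinarith
  have hexp : Filter.Tendsto (fun t : ℝ => Real.exp (-(c / 2) * t) / k) Filter.atTop (nhds 0) := by
    have h1 : Filter.Tendsto (fun t : ℝ => -(c / 2) * t) Filter.atTop Filter.atBot :=
      Filter.tendsto_id.const_mul_atTop_of_neg (by linarith)
    simpa using (Real.tendsto_exp_atBot.comp h1).div_const k
  have hsq : Filter.Tendsto (fun t => ‖p t‖ ^ 2) Filter.atTop (nhds 0) := by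
    refine squeeze_zero' (Filter.Eventually.of_forall fun t => sq_nonneg _) ?_ hexp
    filter_upwards [Filter.eventually_ge_atTop 0] with t ht
    rw [le_div_iff₀ hk, mul_comm]
    exact (hkV (p t)).trans (hdecay t ht)
  rw [tendsto_zero_iff_norm_tendsto_zero]
  have := hsq.sqrt
  simpa using this

/-- Proposition 1: under the internal model condition `Σ S = F Σ`, the design
choice `H Σ + E = 0`, and the LMI condition
`[[W A_cᵀ + A_c W + ε Ñ W Ñᵀ, W H̃ᵀ],[H̃ W, −ε]] ≺ 0`, the linear dynamic
output feedback controller solves the regional bilinear output regulation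
problem: the closed-loop error `(z, ξ − Σw)` converges to zero for any initial
condition in the ellipsoid `{p : pᵀ W⁻¹ p ≤ 1}`, and in particular
`y(t) = C z(t) → 0`. -/
theorem regional_bilinear_output_regulation
    (M ν l r : ℕ)
    (A N : Matrix (Fin M) (Fin M) ℝ) (B : Fin M → ℝ) (C : Matrix (Fin l) (Fin M) ℝ)
    (S : Matrix (Fin r) (Fin r) ℝ) (E : Fin r → ℝ)
    (F : Matrix (Fin ν) (Fin ν) ℝ) (G : Matrix (Fin ν) (Fin l) ℝ)
    (H : Fin ν → ℝ) (Γ : Fin l → ℝ)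
    (Ac : Matrix (Fin M ⊕ Fin ν) (Fin M ⊕ Fin ν) ℝ)
    (hAc : Ac = Matrix.fromBlocks
      (A + Matrix.vecMulVec B (Matrix.vecMul Γ C)) (Matrix.vecMulVec B H) (G * C) F)
    (Nt : Matrix (Fin M ⊕ Fin ν) (Fin M ⊕ Fin ν) ℝ)
    (hNt : Nt = Matrix.fromBlocks N 0 0 0)
    (Ht : Fin M ⊕ Fin ν → ℝ)
    (hHt : Ht = Sum.elim (Matrix.vecMul Γ C) H)
    -- condition (1): internal model principle
    (Sg : Matrix (Fin ν) (Fin r) ℝ)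
    (hIM : Sg * S = F * Sg)
    -- condition (2)
    (hHE : Matrix.vecMul H Sg + E = 0)
    -- condition (3): the LMI
    (ε : ℝ) (hε : 0 < ε)
    (W : Matrix (Fin M ⊕ Fin ν) (Fin M ⊕ Fin ν) ℝ) (hW : W.PosDef)
    (hLMI : (-(Matrix.fromBlocks (W * Acᵀ + Ac * W + ε • (Nt * W * Ntᵀ))
        (Matrix.of fun i (_ : Fin 1) => W.mulVec Ht i)
        (Matrix.of fun (_ : Fin 1) j => Matrix.vecMul Ht W j)
        (Matrix.of fun (_ : Fin 1) (_ : Fin 1) => -ε))).PosDef)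
    -- closed-loop trajectory on [0, ∞)
    (z : ℝ → Fin M → ℝ) (ξ : ℝ → Fin ν → ℝ) (w : ℝ → Fin r → ℝ)
    (hz : ∀ t, 0 ≤ t → HasDerivAt z (A.mulVec (z t)
      + (H ⬝ᵥ ξ t + Γ ⬝ᵥ C.mulVec (z t) + E ⬝ᵥ w t) • B
      + (H ⬝ᵥ ξ t + Γ ⬝ᵥ C.mulVec (z t) + E ⬝ᵥ w t) • N.mulVec (z t)) t)
    (hξ : ∀ t, 0 ≤ t → HasDerivAt ξ (F.mulVec (ξ t) + G.mulVec (C.mulVec (z t))) t)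
    (hw : ∀ t, 0 ≤ t → HasDerivAt w (S.mulVec (w t)) t)
    -- initial condition in the ellipsoid
    (h0 : Sum.elim (z 0) (ξ 0 - Sg.mulVec (w 0)) ⬝ᵥ
      W⁻¹.mulVec (Sum.elim (z 0) (ξ 0 - Sg.mulVec (w 0))) ≤ 1) :
    Filter.Tendsto (fun t => Sum.elim (z t) (ξ t - Sg.mulVec (w t)))
      Filter.atTop (nhds 0) ∧
    Filter.Tendsto (fun t => C.mulVec (z t)) Filter.atTop (nhds 0) := by
  have hmain : Filter.Tendsto (fun t => Sum.elim (z t) (ξ t - Sg.mulVec (w t)))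
      Filter.atTop (nhds 0) := by
    refine rbor_core Ac Nt W Ht ε hε hW hLMI _ (fun t ht => ?_) h0
    have hu : H ⬝ᵥ ξ t + Γ ⬝ᵥ C.mulVec (z t) + E ⬝ᵥ w t =
        Ht ⬝ᵥ Sum.elim (z t) (ξ t - Sg.mulVec (w t)) := by
      have hE : E = -(H ᵥ* Sg) := by
        rw [eq_neg_iff_add_eq_zero, add_comm]; exact hHE
      rw [hHt, sumElim_dotProduct_sumElim, hE, dotProduct_sub, neg_dotProduct,
        dotProduct_mulVec Γ, dotProduct_mulVec H]
      ring
    have h1 := hz t ht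
    have h2 := (hξ t ht).sub (rbor_mulVec_deriv Sg (hw t ht))
    rw [hu] at h1
    set s := Ht ⬝ᵥ Sum.elim (z t) (ξ t - Sg.mulVec (w t)) with hs
    have hz' : Ac *ᵥ Sum.elim (z t) (ξ t - Sg.mulVec (w t)) +
        s • Nt *ᵥ Sum.elim (z t) (ξ t - Sg.mulVec (w t)) =
        Sum.elim (A *ᵥ z t + s • B + s • N *ᵥ z t)
          (F *ᵥ ξ t + G *ᵥ (C *ᵥ z t) - Sg *ᵥ (S *ᵥ w t)) := by
      have hs2 : s = (Γ ᵥ* C) ⬝ᵥ z t + H ⬝ᵥ (ξ t - Sg.mulVec (w t)) := by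
        rw [hs, hHt, sumElim_dotProduct_sumElim]
      rw [hAc, hNt, fromBlocks_mulVec, fromBlocks_mulVec]
      simp only [Sum.elim_comp_inl, Sum.elim_comp_inr]
      funext i
      rcases i with i | i
      · simp only [Pi.add_apply, Pi.smul_apply, Sum.elim_inl, add_mulVec, vecMulVec_mulVec,
          zero_mulVec, Pi.zero_apply, smul_eq_mul]
        generalize N *ᵥ z t = nz
        rw [hs2]
        simp
        ring
      · simp only [Pi.add_apply, Pi.sub_apply, Pi.smul_apply, Sum.elim_inr, zero_mulVec,
          Pi.zero_apply, smul_eq_mul, mulVec_sub, mulVec_mulVec, hIM, Matrix.zero_mul]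
        ring
    rw [hz']
    rw [hasDerivAt_pi]
    rintro (i | i)
    · exact hasDerivAt_pi.1 h1 i
    · exact hasDerivAt_pi.1 h2 i
  refine ⟨hmain, ?_⟩
  have hz0 : Filter.Tendsto z Filter.atTop (nhds 0) := by
    rw [tendsto_pi_nhds] at hmain ⊢
    exact fun i => hmain (Sum.inl i)
  have hcont : Continuous fun x : Fin M → ℝ => C *ᵥ x := by fun_prop
  simpa [Function.comp_def] using (hcont.tendsto 0).comp hz0
end

section
/- (Corollary 1.) Let f, g : ℝⁿ → ℝⁿ and h : ℝⁿ → ℝˡ be smooth, and let ψ₁,…,ψ_M : ℝⁿ → ℝ be continuously differentiable with Ψ(x) = (ψ₁(x),…,ψ_M(x)). Suppose there exist A, N ∈ ℝ^{M×M}, B ∈ ℝ^M, C ∈ ℝ^{l×M} such that for all x ∈ ℝⁿ and all i: ∇ψᵢ(x)·f(x) = (A Ψ(x))ᵢ, ∇ψᵢ(x)·g(x) = Bᵢ + (N Ψ(x))ᵢ, and h(x) = C Ψ(x) (the Koopman bilinear representation of Lemma 1). Let S ∈ ℝ^{r×r}, E ∈ ℝ^{1×r}, and let the controller matrices F, G,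 H, Γ, a matrix Σ ∈ ℝ^{ν×r}, ε > 0, and symmetric positive definite W ∈ ℝ^{(M+ν)×(M+ν)} satisfy the conditions of Proposition 1: Σ S = F Σ, H Σ + E = 0, and the block matrix [[W A_cᵀ + A_c W + ε Ñ W Ñᵀ, W H̃ᵀ],[H̃ W, −ε]] is negative definite, where A_c = [[A + BΓC, BH],[GC, F]], Ñ = [[N,0],[0,0]], H̃ = [ΓC, H]. Then for every differentiable triple (x, ξ, w) : [0,∞) → ℝⁿ × ℝ^ν × ℝ^r satisfying the nonlinear closed loop x' = f(x) + g(x)·(u + v), ξ' = Fξ + G h(x), u = Hξ + Γ h(x), w' = Sw, v = Ew, whose initial condition satisfies (Ψ(x(0)), ξ(0) − Σ w(0))ᵀ W⁻¹ (Ψ(x(0)), ξ(0) − Σ w(0)) ≤ 1, the output is regulated: y(t) = h(x(t)) → 0 as t → ∞. -/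
open Matrix

theorem pd_dot_pos {ι : Type*} [Fintype ι] {Q : Matrix ι ι ℝ} (hQ : Q.PosDef) (v : ι → ℝ)
    (hv : v ≠ 0) : 0 < v ⬝ᵥ Q.mulVec v := by
  simpa using hQ.dotProduct_mulVec_pos hv

theorem pd_dot_nonneg {ι : Type*} [Fintype ι] {Q : Matrix ι ι ℝ} (hQ : Q.PosDef) (v : ι → ℝ) :
    0 ≤ v ⬝ᵥ Q.mulVec v := by
  simpa using hQ.posSemidef.dotProduct_mulVec_nonneg v

theorem sym_dot {ι : Type*} [Fintype ι] {Q : Matrix ι ι ℝ} (hQ : Q.IsHermitian) (u v : ι → ℝ) :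
    u ⬝ᵥ Q.mulVec v = v ⬝ᵥ Q.mulVec u := by
  have hT : Qᵀ = Q := by simpa using hQ.eq
  rw [dotProduct_mulVec, ← mulVec_transpose, hT, dotProduct_comm]

theorem quad_cont {ι : Type*} [Fintype ι] (Q : Matrix ι ι ℝ) :
    Continuous (fun v : ι → ℝ => v ⬝ᵥ Q.mulVec v) := by
  simp only [dotProduct, mulVec]
  fun_prop

theorem pd_compare {ι : Type*} [Fintype ι] {Q : Matrix ι ι ℝ} (hQ : Q.PosDef)
    (R : Matrix ι ι ℝ) : ∃ c : ℝ, 0 < c ∧ ∀ v : ι → ℝ, c * (v ⬝ᵥ R.mulVec v) ≤ v ⬝ᵥ Q.mulVec v := by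
  rcases (Metric.sphere (0 : ι → ℝ) 1).eq_empty_or_nonempty with he | hne
  · refine ⟨1, one_pos, fun v => ?_⟩
    by_cases hv : v = 0
    · simp [hv]
    · exfalso
      have : (‖v‖⁻¹ • v) ∈ Metric.sphere (0 : ι → ℝ) 1 := by
        simp [norm_smul, hv]
      rw [he] at this
      exact this
  · have hc : IsCompact (Metric.sphere (0 : ι → ℝ) 1) := isCompact_sphere _ _
    obtain ⟨a, ha, hamin⟩ := hc.exists_isMinOn hne (quad_cont Q).continuousOn
    obtain ⟨b, hb, hbmax⟩ := hc.exists_isMaxOn hne (quad_cont R).continuousOn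
    have ha0 : a ≠ 0 := by
      rintro rfl
      simp at ha
    have hm := pd_dot_pos hQ a ha0
    set m := a ⬝ᵥ Q.mulVec a
    set K := b ⬝ᵥ R.mulVec b
    have hK : 0 < |K| + 1 := by positivity
    refine ⟨m / (|K| + 1), by positivity, fun v => ?_⟩
    by_cases hv : v = 0
    · simp [hv]
    have hn : 0 < ‖v‖ := norm_pos_iff.mpr hv
    set u := ‖v‖⁻¹ • v with hu
    have hus : u ∈ Metric.sphere (0 : ι → ℝ) 1 := by simp [hu, norm_smul, hv]
    have hvu : v = ‖v‖ • u := by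
      rw [hu, smul_smul, mul_inv_cancel₀ hn.ne', one_smul]
    have h1 : m ≤ u ⬝ᵥ Q.mulVec u := hamin hus
    have h2 : u ⬝ᵥ R.mulVec u ≤ K := hbmax hus
    have h3 : m / (|K| + 1) * (u ⬝ᵥ R.mulVec u) ≤ u ⬝ᵥ Q.mulVec u := by
      refine le_trans ?_ h1
      rw [div_mul_eq_mul_div, div_le_iff₀ hK]
      have := le_abs_self K
      nlinarith
    rw [hvu]
    simp only [mulVec_smul, dotProduct_smul, smul_dotProduct, smul_eq_mul]
    have : 0 < ‖v‖ * ‖v‖ := by positivity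
    nlinarith

theorem static_ineq {ι : Type*} [Fintype ι] (Ac Nt W : Matrix ι ι ℝ) (Ht : ι → ℝ)
    (ε : ℝ) (hε : 0 < ε) (hW : W.PosDef)
    (hLMI : (-(Matrix.fromBlocks (W * Acᵀ + Ac * W + ε • (Nt * W * Ntᵀ))
        (Matrix.of fun i (_ : Fin 1) => W.mulVec Ht i)
        (Matrix.of fun (_ : Fin 1) j => Matrix.vecMul Ht W j)
        (Matrix.of fun (_ : Fin 1) (_ : Fin 1) => -ε))).PosDef) :
    ∃ c : ℝ, 0 < c ∧ ∀ q : ι → ℝ,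
      2 * (q ⬝ᵥ Ac.mulVec (W.mulVec q)) + 2 * (Ht ⬝ᵥ W.mulVec q) * (q ⬝ᵥ Nt.mulVec (W.mulVec q))
        + c * (q ⬝ᵥ W.mulVec q) ≤ (q ⬝ᵥ W.mulVec q - 1) * ((Ht ⬝ᵥ W.mulVec q) ^ 2 / ε) := by
  obtain ⟨c, hc, hq⟩ := pd_compare hLMI (Matrix.fromBlocks W 0 0 (0 : Matrix (Fin 1) (Fin 1) ℝ))
  refine ⟨c, hc, fun q => ?_⟩
  set μ := Ht ⬝ᵥ W.mulVec q with hμ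
  have key := hq (Sum.elim q (fun _ => μ / ε))
  have e1 : q ⬝ᵥ (W * Acᵀ) *ᵥ q = q ⬝ᵥ Ac.mulVec (W.mulVec q) := by
    rw [← mulVec_mulVec, sym_dot hW.isHermitian, mulVec_transpose, ← dotProduct_mulVec]
  set r := Ntᵀ *ᵥ q with hr
  have e2 : q ⬝ᵥ (Nt * W * Ntᵀ) *ᵥ q = r ⬝ᵥ W *ᵥ r := by
    rw [← mulVec_mulVec, ← mulVec_mulVec, dotProduct_mulVec q, ← mulVec_transpose]
  have e3 : q ⬝ᵥ Nt.mulVec (W.mulVec q) = r ⬝ᵥ W *ᵥ q := by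
    rw [dotProduct_mulVec q, ← mulVec_transpose]
  have e4 : (Matrix.of fun i (_ : Fin 1) => W.mulVec Ht i) *ᵥ (fun _ => μ / ε)
      = (μ / ε) • W *ᵥ Ht := by
    ext i
    simp [mulVec, dotProduct, mul_comm]
  have e5 : (Matrix.of fun (_ : Fin 1) j => Matrix.vecMul Ht W j) *ᵥ q = fun _ => μ := by
    ext i
    rw [hμ, dotProduct_mulVec]
    rfl
  have e6 : q ⬝ᵥ W *ᵥ Ht = μ := sym_dot hW.isHermitian _ _
  have e7 : (Matrix.of fun (_ : Fin 1) (_ : Fin 1) => -ε) *ᵥ (fun _ => μ / ε) = fun _ => -μ := by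
    ext i
    simp [mulVec, dotProduct]
    field_simp
  rw [neg_mulVec, dotProduct_neg, fromBlocks_mulVec, fromBlocks_mulVec] at key
  simp only [sumElim_dotProduct_sumElim, Sum.elim_comp_inl, Sum.elim_comp_inr, e4, e5, e7,
    add_mulVec, smul_mulVec, dotProduct_add, dotProduct_smul, e1, e2, e6, smul_eq_mul,
    zero_mulVec, dotProduct_zero, add_zero, ← mulVec_mulVec q Ac W] at key
  have e8 : ∀ a b : ℝ, (fun _ : Fin 1 => a) ⬝ᵥ (fun _ : Fin 1 => b) = a * b := by
    intro a b
    simp [dotProduct]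
  simp only [e8] at key
  have hu := pd_dot_nonneg hW (ε • r - μ • q)
  simp only [mulVec_sub, mulVec_smul, sub_dotProduct, dotProduct_sub, smul_dotProduct,
    dotProduct_smul, smul_eq_mul, sym_dot hW.isHermitian q r] at hu
  rw [e3]
  have hu2 : 0 ≤ ε * (r ⬝ᵥ W *ᵥ r) - 2 * μ * (r ⬝ᵥ W *ᵥ q) + (q ⬝ᵥ W *ᵥ q) * (μ ^ 2 / ε) := by
    have h3 := div_nonneg hu hε.le
    refine h3.trans_eq ?_
    field_simp
    ring
  have h4 : μ / ε * μ = μ ^ 2 / ε := by ring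
  have h5 : μ / ε * -μ = -(μ ^ 2 / ε) := by ring
  rw [h4, h5] at key
  linarith

theorem abstract_conv {ι : Type*} [Fintype ι] [DecidableEq ι] (Ac Nt W : Matrix ι ι ℝ) (Ht : ι → ℝ)
    (ε : ℝ) (hε : 0 < ε) (hW : W.PosDef)
    (hLMI : (-(Matrix.fromBlocks (W * Acᵀ + Ac * W + ε • (Nt * W * Ntᵀ))
        (Matrix.of fun i (_ : Fin 1) => W.mulVec Ht i)
        (Matrix.of fun (_ : Fin 1) j => Matrix.vecMul Ht W j)
        (Matrix.of fun (_ : Fin 1) (_ : Fin 1) => -ε))).PosDef)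
    (p : ℝ → ι → ℝ)
    (hp : ∀ t, 0 ≤ t → HasDerivAt p (Ac *ᵥ p t + (Ht ⬝ᵥ p t) • Nt *ᵥ p t) t)
    (h0 : p 0 ⬝ᵥ W⁻¹ *ᵥ p 0 ≤ 1) :
    Filter.Tendsto p Filter.atTop (nhds 0) := by
  obtain ⟨c, hc, hst⟩ := static_ineq Ac Nt W Ht ε hε hW hLMI
  have hP : W⁻¹.PosDef := hW.inv
  set P := W⁻¹ with hPd
  have hdet : IsUnit W.det := hW.det_pos.ne'.isUnit
  set V : ℝ → ℝ := fun t => p t ⬝ᵥ P *ᵥ p t with hV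
  have hWP : ∀ v, W *ᵥ (P *ᵥ v) = v := fun v => by
    rw [mulVec_mulVec, hPd, mul_nonsing_inv _ hdet, one_mulVec]
  have hVd : ∀ t, 0 ≤ t → ∃ V', HasDerivAt V V' t ∧
      V' + c * V t ≤ (V t - 1) * ((Ht ⬝ᵥ p t) ^ 2 / ε) := by
    intro t ht
    set d := Ac *ᵥ p t + (Ht ⬝ᵥ p t) • Nt *ᵥ p t with hd
    refine ⟨d ⬝ᵥ P *ᵥ p t + p t ⬝ᵥ P *ᵥ d, ?_, ?_⟩
    · have hcomp := hasDerivAt_pi.1 (hp t ht)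
      have h2 : ∀ i, HasDerivAt (fun s => (P *ᵥ p s) i) ((P *ᵥ d) i) t := by
        intro i
        simp only [mulVec, dotProduct]
        exact HasDerivAt.fun_sum fun j _ => (hcomp j).const_mul _
      simp only [hV, dotProduct, ← Finset.sum_add_distrib]
      exact HasDerivAt.fun_sum fun j _ => (hcomp j).mul (h2 j)
    · have h := hst (P *ᵥ p t)
      rw [hWP, dotProduct_comm (P *ᵥ p t) (p t)] at h
      rw [sym_dot hP.isHermitian (p t) d, dotProduct_comm d, hd]
      simp only [dotProduct_add, dotProduct_smul, smul_eq_mul]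
      change _ ≤ (p t ⬝ᵥ P *ᵥ p t - 1) * _
      change _ + c * (p t ⬝ᵥ P *ᵥ p t) ≤ _
      linarith
  choose! V' hV' hVle using hVd
  have hVcont : ContinuousOn V (Set.Ici 0) := fun t ht =>
    (hV' t ht).continuousAt.continuousWithinAt
  have hV1 : ∀ t, 0 ≤ t → V t ≤ 1 := by
    intro T hT
    refine image_le_of_deriv_right_lt_deriv_boundary (a := 0) (b := T) (f := V) (f' := V')
      (B := fun _ => 1) (B' := fun _ => 0) (hVcont.mono fun s hs => hs.1)
      (fun s hs => (hV' s hs.1).hasDerivWithinAt) h0 (fun s => hasDerivAt_const s 1) ?_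
      (Set.right_mem_Icc.2 hT)
    intro s hs hs1
    have := hVle s hs.1
    rw [hs1] at this
    simp only [mul_one, sub_self, zero_mul] at this
    linarith
  have hanti : AntitoneOn (fun t => V t * Real.exp (c * t)) (Set.Ici 0) := by
    have hder : ∀ t, 0 ≤ t → HasDerivAt (fun t => V t * Real.exp (c * t))
        (V' t * Real.exp (c * t) + V t * (Real.exp (c * t) * c)) t := fun t ht => by
      have : HasDerivAt (fun t => c * t) c t := by simpa using (hasDerivAt_id t).const_mul c
      exact (hV' t ht).mul this.exp
    refine antitoneOn_of_deriv_nonpos (convex_Ici 0)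
      (fun t ht => (hder t ht).continuousAt.continuousWithinAt) ?_ ?_
    · intro t ht
      rw [interior_Ici] at ht
      exact (hder t (le_of_lt ht)).differentiableAt.differentiableWithinAt
    · intro t ht
      rw [interior_Ici] at ht
      have ht : 0 ≤ t := le_of_lt ht
      rw [(hder t ht).deriv]
      have h1 := hVle t ht
      have h2 : (V t - 1) * ((Ht ⬝ᵥ p t) ^ 2 / ε) ≤ 0 :=
        mul_nonpos_of_nonpos_of_nonneg (by linarith [hV1 t ht]) (by positivity)
      have h3 := Real.exp_pos (c * t)
      nlinarith
  have hVb : ∀ t, 0 ≤ t → V t ≤ V 0 * Real.exp (-(c * t)) := by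
    intro t ht
    have := hanti Set.self_mem_Ici ht ht
    simp only [mul_zero, Real.exp_zero, mul_one] at this
    rw [Real.exp_neg, ← div_eq_mul_inv, le_div_iff₀ (Real.exp_pos _)]
    exact this
  have hexp : Filter.Tendsto (fun t => V 0 * Real.exp (-(c * t))) Filter.atTop (nhds 0) := by
    have : Filter.Tendsto (fun t => Real.exp (-(c * t))) Filter.atTop (nhds 0) :=
      Real.tendsto_exp_neg_atTop_nhds_zero.comp (Filter.tendsto_id.const_mul_atTop hc)
    simpa using this.const_mul (V 0)
  obtain ⟨k, hk, hkq⟩ := pd_compare hP (1 : Matrix ι ι ℝ)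
  rw [tendsto_pi_nhds]
  intro i
  have hsq : Filter.Tendsto (fun t => (p t i) ^ 2) Filter.atTop (nhds 0) := by
    have h4 : Filter.Tendsto (fun t => (V 0 * Real.exp (-(c * t))) / k) Filter.atTop (nhds 0) := by
      simpa using hexp.div_const k
    refine tendsto_of_tendsto_of_tendsto_of_le_of_le' tendsto_const_nhds h4
      (Filter.Eventually.of_forall fun t => sq_nonneg _) ?_
    filter_upwards [Filter.eventually_ge_atTop 0] with t ht
    rw [le_div_iff₀ hk]
    refine le_trans ?_ (hVb t ht)
    refine le_trans ?_ (hkq (p t))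
    rw [one_mulVec, mul_comm]
    refine mul_le_mul_of_nonneg_left ?_ hk.le
    have := Finset.single_le_sum (f := fun j => p t j * p t j)
      (fun j _ => mul_self_nonneg _) (Finset.mem_univ i)
    simpa [dotProduct, sq] using this
  have habs := hsq.sqrt
  simp only [Real.sqrt_sq_eq_abs, Real.sqrt_zero] at habs
  exact (tendsto_zero_iff_abs_tendsto_zero _).2 habs

/-- Corollary 1: if the nonlinear system `ẋ = f(x) + g(x)(u+v)`, `y = h(x)`
admits an exact Koopman bilinear representation through the dictionary `Ψ`
with matrices `A, B, N, C`, and the controller matrices satisfy the conditions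
of Proposition 1, then the linear dynamic output feedback controller locally
solves the nonlinear output regulation problem: `y(t) = h(x(t)) → 0`. -/
theorem nonlinear_output_regulation_via_koopman
    (n M l ν r : ℕ)
    (f g : (Fin n → ℝ) → (Fin n → ℝ))
    (h : (Fin n → ℝ) → (Fin l → ℝ))
    (hf : ContDiff ℝ (⊤ : ℕ∞) f) (hg : ContDiff ℝ (⊤ : ℕ∞) g) (hh : ContDiff ℝ (⊤ : ℕ∞) h)
    (ψ : Fin M → (Fin n → ℝ) → ℝ)
    (hψ : ∀ i, ContDiff ℝ 1 (ψ i))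
    -- the Koopman bilinear representation of Lemma 1
    (A N : Matrix (Fin M) (Fin M) ℝ) (B : Fin M → ℝ) (C : Matrix (Fin l) (Fin M) ℝ)
    (hrepA : ∀ (x : Fin n → ℝ) (i : Fin M),
      fderiv ℝ (ψ i) x (f x) = A.mulVec (fun k => ψ k x) i)
    (hrepB : ∀ (x : Fin n → ℝ) (i : Fin M),
      fderiv ℝ (ψ i) x (g x) = B i + N.mulVec (fun k => ψ k x) i)
    (hrepC : ∀ x : Fin n → ℝ, h x = C.mulVec fun k => ψ k x)
    -- exosystem and controller matrices
    (S : Matrix (Fin r) (Fin r) ℝ) (E : Fin r → ℝ)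
    (F : Matrix (Fin ν) (Fin ν) ℝ) (G : Matrix (Fin ν) (Fin l) ℝ)
    (H : Fin ν → ℝ) (Γ : Fin l → ℝ)
    (Ac : Matrix (Fin M ⊕ Fin ν) (Fin M ⊕ Fin ν) ℝ)
    (hAc : Ac = Matrix.fromBlocks
      (A + Matrix.vecMulVec B (Matrix.vecMul Γ C)) (Matrix.vecMulVec B H) (G * C) F)
    (Nt : Matrix (Fin M ⊕ Fin ν) (Fin M ⊕ Fin ν) ℝ)
    (hNt : Nt = Matrix.fromBlocks N 0 0 0)
    (Ht : Fin M ⊕ Fin ν → ℝ)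
    (hHt : Ht = Sum.elim (Matrix.vecMul Γ C) H)
    -- conditions of Proposition 1
    (Sg : Matrix (Fin ν) (Fin r) ℝ)
    (hIM : Sg * S = F * Sg)
    (hHE : Matrix.vecMul H Sg + E = 0)
    (ε : ℝ) (hε : 0 < ε)
    (W : Matrix (Fin M ⊕ Fin ν) (Fin M ⊕ Fin ν) ℝ) (hW : W.PosDef)
    (hLMI : (-(Matrix.fromBlocks (W * Acᵀ + Ac * W + ε • (Nt * W * Ntᵀ))
        (Matrix.of fun i (_ : Fin 1) => W.mulVec Ht i)
        (Matrix.of fun (_ : Fin 1) j => Matrix.vecMul Ht W j)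
        (Matrix.of fun (_ : Fin 1) (_ : Fin 1) => -ε))).PosDef)
    -- closed-loop nonlinear trajectory on [0, ∞)
    (x : ℝ → Fin n → ℝ) (ξ : ℝ → Fin ν → ℝ) (w : ℝ → Fin r → ℝ)
    (hx : ∀ t, 0 ≤ t → HasDerivAt x (f (x t)
      + ((H ⬝ᵥ ξ t + Γ ⬝ᵥ h (x t)) + E ⬝ᵥ w t) • g (x t)) t)
    (hξ : ∀ t, 0 ≤ t → HasDerivAt ξ (F.mulVec (ξ t) + G.mulVec (h (x t))) t)
    (hw : ∀ t, 0 ≤ t → HasDerivAt w (S.mulVec (w t)) t)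
    -- initial condition in the ellipsoid
    (h0 : Sum.elim (fun k => ψ k (x 0)) (ξ 0 - Sg.mulVec (w 0)) ⬝ᵥ
      W⁻¹.mulVec (Sum.elim (fun k => ψ k (x 0)) (ξ 0 - Sg.mulVec (w 0))) ≤ 1) :
    Filter.Tendsto (fun t => h (x t)) Filter.atTop (nhds 0) := by
  set p : ℝ → Fin M ⊕ Fin ν → ℝ :=
    fun t => Sum.elim (fun k => ψ k (x t)) (ξ t - Sg.mulVec (w t)) with hpd
  have hE : ∀ t, E ⬝ᵥ w t = - (H ⬝ᵥ Sg *ᵥ w t) := by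
    intro t
    rw [dotProduct_mulVec, ← neg_dotProduct, eq_neg_of_add_eq_zero_right hHE]
  have hμ : ∀ t, (H ⬝ᵥ ξ t + Γ ⬝ᵥ h (x t)) + E ⬝ᵥ w t = Ht ⬝ᵥ p t := by
    intro t
    rw [hHt, hpd, sumElim_dotProduct_sumElim, hE, hrepC, dotProduct_mulVec, dotProduct_sub]
    ring
  have hp : ∀ t, 0 ≤ t → HasDerivAt p (Ac *ᵥ p t + (Ht ⬝ᵥ p t) • Nt *ᵥ p t) t := by
    intro t ht
    rw [hasDerivAt_pi]
    have hx' := hx t ht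
    have hm := hμ t
    have hm2 : Ht ⬝ᵥ p t = Matrix.vecMul Γ C ⬝ᵥ (fun k => ψ k (x t))
        + H ⬝ᵥ (ξ t - Sg *ᵥ w t) := by
      rw [hHt, hpd, sumElim_dotProduct_sumElim]
    rw [hm] at hx'
    rintro (i | i)
    · have hd : HasFDerivAt (ψ i) (fderiv ℝ (ψ i) (x t)) (x t) :=
        ((hψ i).differentiable one_ne_zero (x t)).hasFDerivAt
      have h1 := hd.comp_hasDerivAt t hx'
      rw [map_add, map_smul, hrepA, hrepB] at h1
      refine h1.congr_deriv ?_
      simp only [hAc, hNt, Pi.add_apply, Pi.smul_apply, smul_eq_mul]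
      rw [hm2]
      simp only [hpd, fromBlocks_mulVec, Sum.elim_inl, Sum.elim_comp_inl, Sum.elim_comp_inr,
        Pi.add_apply, add_mulVec, zero_mulVec, Pi.zero_apply, vecMulVec_mulVec, Pi.smul_apply,
        MulOpposite.smul_eq_mul_unop, MulOpposite.unop_op]
      ring
    · have h1 := hasDerivAt_pi.1 (hξ t ht) i
      have h2 : HasDerivAt (fun s => (Sg *ᵥ w s) i) ((Sg *ᵥ (S *ᵥ w t)) i) t := by
        simp only [mulVec, dotProduct]
        exact HasDerivAt.fun_sum fun j _ => (hasDerivAt_pi.1 (hw t ht) j).const_mul _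
      refine (h1.sub h2).congr_deriv ?_
      simp only [hAc, hNt, Pi.add_apply, Pi.smul_apply, smul_eq_mul]
      simp only [hpd, fromBlocks_mulVec, Sum.elim_inr, Sum.elim_comp_inl, Sum.elim_comp_inr,
        Pi.add_apply, zero_mulVec, Pi.zero_apply, mulVec_sub, Pi.sub_apply, mulVec_mulVec, hIM,
        hrepC, Matrix.zero_mul]
      ring
  have hlim := abstract_conv Ac Nt W Ht ε hε hW hLMI p hp h0
  have hz : Filter.Tendsto (fun t => (fun k => ψ k (x t))) Filter.atTop (nhds (0 : Fin M → ℝ)) := by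
    rw [tendsto_pi_nhds] at hlim ⊢
    intro k
    exact hlim (Sum.inl k)
  have hcont : Continuous (fun v : Fin M → ℝ => C *ᵥ v) := by
    exact Continuous.matrix_mulVec continuous_const continuous_id
  have := (hcont.tendsto 0).comp hz
  rw [mulVec_zero] at this
  simp only [hrepC]
  exact this
end

section
/- Let κ₁, κ₂ ∈ ℝ, and define f : ℝ² → ℝ² by f(x₁,x₂) = (κ₁ x₁, κ₂(x₂ − x₁²)), g : ℝ² → ℝ² by g(x₁,x₂) = (x₁, 1), and h : ℝ² → ℝ by h(x₁,x₂) = x₂ − x₂³/6. Consider the dictionary of ten observables on ℝ²: ψ₁ = x₁, ψ₂ = x₂, ψ₃ = x₁², ψ₄ = x₂², ψ₅ = x₂³, ψ₆ = x₁²x₂, ψ₇ = x₁⁴, ψ₈ = x₁²x₂², ψ₉ = x₁⁴x₂, ψ₁₀ = x₁⁶. Then: (1) for each i ∈ {1,…,10}, the function (x₁,x₂) ↦ ∇ψᵢ(x₁,x₂)·f(x₁,x₂) lies in the real linear span of {ψ₁,…,ψ₁₀}; (2) for each i ∈ {1,…,10}, the function (x₁,x₂) ↦ ∇ψᵢ(x₁,x₂)·g(x₁,x₂)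 lies in the real linear span of the constant function 1 together with {ψ₁,…,ψ₁₀}; (3) h lies in the real linear span of {ψ₁,…,ψ₁₀}; (4) the coordinate functions x₁ and x₂ lie in the span of {ψ₁,…,ψ₁₀}. -/
open Matrix

theorem mem_span_aux (ψ : Fin 10 → (Fin 2 → ℝ) → ℝ) (F : (Fin 2 → ℝ) → ℝ) (c : Fin 10 → ℝ)
    (hF : ∀ x, F x = ∑ i, c i * ψ i x) : F ∈ Submodule.span ℝ (Set.range ψ) := by
  have : F = ∑ i, c i • ψ i := by
    funext x
    simp [hF, Finset.sum_apply]
  rw [this]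
  exact Submodule.sum_mem _ fun i _ =>
    Submodule.smul_mem _ _ (Submodule.subset_span (Set.mem_range_self i))

theorem mem_span_aux' (ψ : Fin 10 → (Fin 2 → ℝ) → ℝ) (F : (Fin 2 → ℝ) → ℝ) (c : Fin 10 → ℝ)
    (d : ℝ) (hF : ∀ x, F x = d + ∑ i, c i * ψ i x) :
    F ∈ Submodule.span ℝ (insert (fun _ => (1 : ℝ)) (Set.range ψ)) := by
  have : F = d • (fun _ => (1 : ℝ)) + fun x => ∑ i, c i * ψ i x := by
    funext x
    simp [hF]
  rw [this]
  refine Submodule.add_mem _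
    (Submodule.smul_mem _ _ (Submodule.subset_span (Set.mem_insert _ _))) ?_
  exact Submodule.span_mono (Set.subset_insert _ _) (mem_span_aux ψ _ c fun _ => rfl)

theorem fderiv_monomial_aux (a b : ℕ) (x v : Fin 2 → ℝ) :
    fderiv ℝ (fun x : Fin 2 → ℝ => x 0 ^ a * x 1 ^ b) x v
      = a * x 0 ^ (a - 1) * v 0 * x 1 ^ b + x 0 ^ a * (b * x 1 ^ (b - 1) * v 1) := by
  have h0 : HasFDerivAt (fun x : Fin 2 → ℝ => x 0)
    (ContinuousLinearMap.proj (R := ℝ) (φ := fun _ : Fin 2 => ℝ) 0) x := hasFDerivAt_apply 0 x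
  have h1 : HasFDerivAt (fun x : Fin 2 → ℝ => x 1)
    (ContinuousLinearMap.proj (R := ℝ) (φ := fun _ : Fin 2 => ℝ) 1) x := hasFDerivAt_apply 1 x
  have key : fderiv ℝ (fun x : Fin 2 → ℝ => x 0 ^ a * x 1 ^ b) x = _ :=
    ((h0.pow a).mul (h1.pow b)).fderiv
  rw [key]
  simp
  ring

/-- The ten-observable dictionary of the example system satisfies the four
hypotheses of Lemma 1: invariance of the drift directional derivatives,
affine-in-dictionary input directional derivatives, output in the span, and
state components in the span. -/
theorem example_dictionary_satisfies_lemma1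
    (κ1 κ2 : ℝ)
    (f g : (Fin 2 → ℝ) → (Fin 2 → ℝ))
    (h : (Fin 2 → ℝ) → ℝ)
    (hf : f = fun x => ![κ1 * x 0, κ2 * (x 1 - (x 0) ^ 2)])
    (hg : g = fun x => ![x 0, 1])
    (hh : h = fun x => x 1 - (x 1) ^ 3 / 6)
    (ψ : Fin 10 → (Fin 2 → ℝ) → ℝ)
    (hψ : ψ = ![fun x => x 0, fun x => x 1, fun x => (x 0) ^ 2,
      fun x => (x 1) ^ 2, fun x => (x 1) ^ 3, fun x => (x 0) ^ 2 * x 1,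
      fun x => (x 0) ^ 4, fun x => (x 0) ^ 2 * (x 1) ^ 2,
      fun x => (x 0) ^ 4 * x 1, fun x => (x 0) ^ 6]) :
    (∀ i : Fin 10,
      (fun x => fderiv ℝ (ψ i) x (f x)) ∈ Submodule.span ℝ (Set.range ψ)) ∧
    (∀ i : Fin 10,
      (fun x => fderiv ℝ (ψ i) x (g x)) ∈
        Submodule.span ℝ (insert (fun _ => (1 : ℝ)) (Set.range ψ))) ∧
    (h ∈ Submodule.span ℝ (Set.range ψ)) ∧
    ((fun x : Fin 2 → ℝ => x 0) ∈ Submodule.span ℝ (Set.range ψ) ∧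
     (fun x : Fin 2 → ℝ => x 1) ∈ Submodule.span ℝ (Set.range ψ)) := by
  have hm : ∀ i, ψ i = fun x => x 0 ^ (![1, 0, 2, 0, 0, 2, 4, 2, 4, 6] i : ℕ) * x 1 ^ (![0, 1, 0, 2, 3, 1, 0, 2, 1, 0] i : ℕ) := by
    intro i
    subst hψ
    fin_cases i <;> simp
  have hsum : ∀ (c : Fin 10 → ℝ) (x : Fin 2 → ℝ), ∑ i, c i * ψ i x =
      c 0 * x 0 + c 1 * x 1 + c 2 * x 0 ^ 2 + c 3 * x 1 ^ 2 + c 4 * x 1 ^ 3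
      + c 5 * (x 0 ^ 2 * x 1) + c 6 * x 0 ^ 4 + c 7 * (x 0 ^ 2 * x 1 ^ 2)
      + c 8 * (x 0 ^ 4 * x 1) + c 9 * x 0 ^ 6 := by
    intro c x
    subst hψ
    rw [Fin.sum_univ_castSucc, Fin.sum_univ_castSucc, Fin.sum_univ_eight]
    simp
  refine ⟨fun i => mem_span_aux ψ _ ((![![κ1, 0, 0, 0, 0, 0, 0, 0, 0, 0],
      ![0, κ2, -κ2, 0, 0, 0, 0, 0, 0, 0],
      ![0, 0, 2*κ1, 0, 0, 0, 0, 0, 0, 0],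
      ![0, 0, 0, 2*κ2, 0, -2*κ2, 0, 0, 0, 0],
      ![0, 0, 0, 0, 3*κ2, 0, 0, -3*κ2, 0, 0],
      ![0, 0, 0, 0, 0, 2*κ1+κ2, -κ2, 0, 0, 0],
      ![0, 0, 0, 0, 0, 0, 4*κ1, 0, 0, 0],
      ![0, 0, 0, 0, 0, 0, 0, 2*κ1+2*κ2, -2*κ2, 0],
      ![0, 0, 0, 0, 0, 0, 0, 0, 4*κ1+κ2, -κ2],
      ![0, 0, 0, 0, 0, 0, 0, 0, 0, 6*κ1]] : Fin 10 → Fin 10 → ℝ) i) fun x => ?_,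
    fun i => mem_span_aux' ψ _ ((![![1, 0, 0, 0, 0, 0, 0, 0, 0, 0],
      ![0, 0, 0, 0, 0, 0, 0, 0, 0, 0],
      ![0, 0, 2, 0, 0, 0, 0, 0, 0, 0],
      ![0, 2, 0, 0, 0, 0, 0, 0, 0, 0],
      ![0, 0, 0, 3, 0, 0, 0, 0, 0, 0],
      ![0, 0, 1, 0, 0, 2, 0, 0, 0, 0],
      ![0, 0, 0, 0, 0, 0, 4, 0, 0, 0],
      ![0, 0, 0, 0, 0, 2, 0, 2, 0, 0],
      ![0, 0, 0, 0, 0, 0, 1, 0, 4, 0],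
      ![0, 0, 0, 0, 0, 0, 0, 0, 0, 6]] : Fin 10 → Fin 10 → ℝ) i) (if i = 1 then 1 else 0)
      fun x => ?_,
    mem_span_aux ψ _ ![0, 1, 0, 0, -1/6, 0, 0, 0, 0, 0] fun x => ?_, ?_, ?_⟩
  · rw [hsum, hm, fderiv_monomial_aux, hf]
    fin_cases i <;> simp <;> ring
  · rw [hsum, hm, fderiv_monomial_aux, hg]
    fin_cases i <;> simp <;> ring
  · rw [hsum, hh]
    simp
    ring
  · exact Submodule.subset_span ⟨0, by rw [hψ]; rfl⟩
  · exact Submodule.subset_span ⟨1, by rw [hψ]; rfl⟩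
end
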